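/- arXiv:2605.16709 — 4 statements merged into one kernel-verified Lean document; each statement's English description precedes it below -/
import Mathlib

section
/- Strong soft-covering lemma (doubly-exponential concentration). Let U, X be finite sets, P_U a pmf on U, and W_{X|U} a conditional pmf; let P_X(x) = Σ_u P_U(u) W_{X|U}(x|u) and let I(U;X) be the mutual information under the joint pmf P_U · W_{X|U}. For each n, let C_n = (U^n(1), …, U^n(N_n)) with N_n = ⌈2^{nR}⌉ be a random codebook whose codewords are drawn independently, each from P_U^{⊗n}, and let P̂_{X^n}(x^n) = (1/N_n) Σ_{i=1}^{N_n} ∏_{t=1}^n W_{X|U}(x_t | U_t(i)). If R > I(U;X), then there exist γ₁ > 0 and γ₂ > 0 such that for all sufficiently large n, P( V(P̂_{X^n}, P_X^{⊗n}) > (1/√2) e^{−γ₁ n} ) ≤ e^{−e^{γ₂ n}}. -/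
open Finset Filter Real

noncomputable section

open scoped Classical

/-- Pushforward of a mass function along a map. -/
def pushf {α β : Type*} [Fintype α] (p : α → ℝ) (f : α → β) : β → ℝ :=
  fun b => ∑ a, if f a = b then p a else 0

/-- Shannon entropy (in bits) of a mass function on a finite type,
with the convention `0 * logb 2 0 = 0`. -/
def ent {α : Type*} [Fintype α] (p : α → ℝ) : ℝ := -∑ a, p a * Real.logb 2 (p a)

/-- Shannon entropy (in bits) of a random variable `f` under the mass function `p`. -/
def entRV {α β : Type*} [Fintype α] [Fintype β] (p : α → ℝ) (f : α → β) : ℝ :=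
  ent (pushf p f)

/-- Mutual information `I(f; g)` (in bits) under the mass function `p`. -/
def mi {α β γ : Type*} [Fintype α] [Fintype β] [Fintype γ]
    (p : α → ℝ) (f : α → β) (g : α → γ) : ℝ :=
  entRV p f + entRV p g - entRV p (fun a => (f a, g a))

/-- Conditional mutual information `I(f; g | h)` (in bits) under the mass function `p`. -/
def cmi {α β γ δ : Type*} [Fintype α] [Fintype β] [Fintype γ] [Fintype δ]
    (p : α → ℝ) (f : α → β) (g : α → γ) (h : α → δ) : ℝ :=
  entRV p (fun a => (f a, h a)) + entRV p (fun a => (g a, h a))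
    - entRV p (fun a => (f a, g a, h a)) - entRV p h

/-- Conditional entropy `H(f | g)` (in bits) under the mass function `p`. -/
def condEnt {α β γ : Type*} [Fintype α] [Fintype β] [Fintype γ]
    (p : α → ℝ) (f : α → β) (g : α → γ) : ℝ :=
  entRV p (fun a => (f a, g a)) - entRV p g

/-- Total variation distance between two mass functions on a finite type. -/
def TV {α : Type*} [Fintype α] (p q : α → ℝ) : ℝ := (∑ a, |p a - q a|) / 2

/-- The binary entropy function (in bits), with `h2 0 = h2 1 = 0`. -/
def h2 (t : ℝ) : ℝ := -(t * Real.logb 2 t) - (1 - t) * Real.logb 2 (1 - t)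

/-!
Fix a threshold `r` between `I(U;X)` and the rate (in nats) and split the channel law `W^n` at each
output sequence into the part where its likelihood ratio to the output law is at most `e^{nr}` and
the rest. The variance of the average of the first part over the codebook gives a mean total
variation of order `√(e^{nr} / N)`, and the rest has exponentially small joint probability by a
Chernoff bound for the information density. So the mean total variation distance is exponentially
small. Replacing one codeword moves the distance by at most `1 / N`, so by McDiarmid's inequality
it exceeds twice its mean bound `θ / 2` with probability at most `exp (-N * θ ^ 2 / 2)`, which is
doubly exponentially small because `N` outgrows `θ ^ (-2)`.
-/

section Mean

variable {α β : Type*} [Fintype α]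

/-- The expectation of `f` under the mass function `p`. -/
def mean (p f : α → ℝ) : ℝ := ∑ a, p a * f a

/-- The probability of the event `S` under the mass function `p`. -/
def prob (p : α → ℝ) (S : α → Prop) [DecidablePred S] : ℝ := ∑ a, if S a then p a else 0

variable {p : α → ℝ}

lemma mean_add (p f g : α → ℝ) : mean p (fun a => f a + g a) = mean p f + mean p g := by
  simp only [mean, mul_add, sum_add_distrib]

lemma mean_sub (p f g : α → ℝ) : mean p (fun a => f a - g a) = mean p f - mean p g := by
  simp only [mean, mul_sub, sum_sub_distrib]

lemma mean_const_mul (p f : α → ℝ) (k : ℝ) : mean p (fun a => k * f a) = k * mean p f := by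
  simp only [mean, mul_left_comm, mul_sum]

lemma mean_sum (p : α → ℝ) (s : Finset β) (f : β → α → ℝ) :
    mean p (fun a => ∑ b ∈ s, f b a) = ∑ b ∈ s, mean p (f b) := by
  simp only [mean, mul_sum]
  exact sum_comm

lemma mean_const (hp : ∑ a, p a = 1) (k : ℝ) : mean p (fun _ => k) = k := by
  simp only [mean, ← sum_mul, hp, one_mul]

lemma mean_congr {f g : α → ℝ} (h : ∀ a, p a ≠ 0 → f a = g a) : mean p f = mean p g :=
  sum_congr rfl fun a _ => by
    by_cases ha : p a = 0
    · simp only [ha, zero_mul]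
    · rw [h a ha]

lemma mean_mono (hp : ∀ a, 0 ≤ p a) {f g : α → ℝ} (h : ∀ a, f a ≤ g a) : mean p f ≤ mean p g :=
  sum_le_sum fun a _ => mul_le_mul_of_nonneg_left (h a) (hp a)

lemma mean_nonneg (hp : ∀ a, 0 ≤ p a) {f : α → ℝ} (h : ∀ a, 0 ≤ f a) : 0 ≤ mean p f :=
  sum_nonneg fun a _ => mul_nonneg (hp a) (h a)

lemma abs_mean_le (hp : ∀ a, 0 ≤ p a) (f : α → ℝ) : |mean p f| ≤ mean p (fun a => |f a|) :=
  (abs_sum_le_sum_abs _ _).trans_eq <|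
    sum_congr rfl fun a _ => by rw [abs_mul, abs_of_nonneg (hp a)]

lemma mean_abs_le_sqrt_mean_sq (hp : p ∈ stdSimplex ℝ α) (f : α → ℝ) :
    mean p (fun a => |f a|) ≤ √(mean p fun a => f a ^ 2) := by
  refine Real.le_sqrt_of_sq_le ?_
  simpa only [mean, sq_abs] using Real.pow_arith_mean_le_arith_mean_pow univ p (fun a => |f a|)
    (fun a _ => hp.1 a) hp.2 (fun a _ => abs_nonneg (f a)) 2

lemma mean_sub_mean_sq_le (hp : ∑ a, p a = 1) (f : α → ℝ) :
    mean p (fun a => (f a - mean p f) ^ 2) ≤ mean p (fun a => f a ^ 2) := by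
  have expand : (fun a => (f a - mean p f) ^ 2) =
      fun a => f a ^ 2 - 2 * mean p f * f a + mean p f ^ 2 := by
    funext a; ring
  rw [expand, mean_add, mean_sub, mean_const_mul, mean_const hp]
  linarith [sq_nonneg (mean p f)]

lemma prob_le_mean (hp : ∀ a, 0 ≤ p a) {S : α → Prop} [DecidablePred S] {f : α → ℝ}
    (hf : ∀ a, 0 ≤ f a) (hS : ∀ a, p a ≠ 0 → S a → 1 ≤ f a) : prob p S ≤ mean p f := by
  refine sum_le_sum fun a _ => ?_
  split_ifs with ha
  · by_cases hpa : p a = 0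
    · simp only [hpa, zero_mul, le_refl]
    · exact le_mul_of_one_le_right (hp a) (hS a hpa ha)
  · exact mul_nonneg (hp a) (hf a)

lemma prob_gt_le_exp_mul_mean_exp (hp : ∀ a, 0 ≤ p a) (f : α → ℝ) {l : ℝ} (hl : 0 ≤ l) (θ : ℝ) :
    prob p (fun a => f a > θ) ≤ exp (-(l * θ)) * mean p (fun a => exp (l * f a)) := by
  rw [← mean_const_mul]
  refine prob_le_mean hp (fun a => by positivity) fun a _ ha => ?_
  rw [← exp_add, one_le_exp_iff]
  linarith [mul_le_mul_of_nonneg_left (le_of_lt ha) hl]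

/-- A real-valued mass function in the standard simplex, as a Mathlib `PMF`. It gives access to
Hoeffding's lemma, which Mathlib states for measures. -/
def simplexPMF (hp : p ∈ stdSimplex ℝ α) : PMF α :=
  PMF.ofFintype (fun a => ENNReal.ofReal (p a)) <| by
    rw [← ENNReal.ofReal_sum_of_nonneg fun a _ => hp.1 a, hp.2, ENNReal.ofReal_one]

lemma integral_simplexPMF [MeasurableSpace α] [MeasurableSingletonClass α]
    (hp : p ∈ stdSimplex ℝ α) (f : α → ℝ) : ∫ a, f a ∂(simplexPMF hp).toMeasure = mean p f := by
  rw [PMF.integral_eq_sum]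
  refine sum_congr rfl fun a _ => ?_
  rw [simplexPMF, PMF.ofFintype_apply, ENNReal.toReal_ofReal (hp.1 a), smul_eq_mul]

lemma mean_exp_le_of_abs_sub_le (hp : p ∈ stdSimplex ℝ α) {g : α → ℝ} {K : ℝ}
    (hg : ∀ a b, |g a - g b| ≤ K) (l : ℝ) :
    mean p (fun a => exp (l * g a)) ≤ exp (l * mean p g + l ^ 2 * K ^ 2 / 8) := by
  let _ : MeasurableSpace α := ⊤
  have : Nonempty α := (isEmpty_or_nonempty α).resolve_left fun _ => by simpa using hp.2
  obtain ⟨a₀, hmin⟩ := Finite.exists_min g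
  have hmem : ∀ a, g a ∈ Set.Icc (g a₀) (g a₀ + K) := fun a =>
    ⟨hmin a, by linarith [le_of_abs_le (hg a a₀)]⟩
  have hmgf := (ProbabilityTheory.hasSubgaussianMGF_of_mem_Icc (μ := (simplexPMF hp).toMeasure)
    (measurable_from_top (f := g)).aemeasurable (.of_forall hmem)).mgf_le l
  simp only [ProbabilityTheory.mgf, integral_simplexPMF, add_sub_cancel_left, NNReal.coe_pow,
    NNReal.coe_div, coe_nnnorm, NNReal.coe_ofNat, div_pow, norm_eq_abs, sq_abs] at hmgf
  have center : (fun a => exp (l * g a)) =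
      fun a => exp (l * mean p g) * exp (l * (g a - mean p g)) := by
    funext a; rw [← exp_add]; ring_nf
  rw [center, mean_const_mul, exp_add]
  gcongr
  exact hmgf.trans_eq (by ring_nf)

end Mean

section ProdMass

variable {ι α : Type*} [Fintype ι]

/-- The joint mass function of independent coordinates with mass functions `p i`; the `n`-fold
power of `p` is `prodMass fun _ : Fin n => p`. -/
def prodMass (p : ι → α → ℝ) (c : ι → α) : ℝ := ∏ i, p i (c i)

lemma prodMass_nonneg {p : ι → α → ℝ} (hp : ∀ i a, 0 ≤ p i a) (c : ι → α) : 0 ≤ prodMass p c :=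
  prod_nonneg fun i _ => hp i (c i)

variable [DecidableEq ι] [Fintype α]

lemma mean_prodMass_prod (p f : ι → α → ℝ) :
    mean (prodMass p) (fun c => ∏ i, f i (c i)) = ∏ i, mean (p i) (f i) := by
  simp only [mean, prodMass, ← prod_mul_distrib, Fintype.prod_sum]

lemma prodMass_mem_stdSimplex {p : ι → α → ℝ} (hp : ∀ i, p i ∈ stdSimplex ℝ α) :
    prodMass p ∈ stdSimplex ℝ (ι → α) := by
  refine ⟨prodMass_nonneg fun i => (hp i).1, ?_⟩
  simp only [prodMass, ← Fintype.prod_sum, (hp _).2, prod_const_one]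

lemma mean_prodMass_apply {p : ι → α → ℝ} (hp : ∀ i, p i ∈ stdSimplex ℝ α) (i : ι) (f : α → ℝ) :
    mean (prodMass p) (fun c => f (c i)) = mean (p i) f := by
  have h := mean_prodMass_prod p fun k a => if k = i then f a else 1
  rw [Fintype.prod_eq_single i fun k hk => by simp only [hk, if_false, mean_const (hp k).2]] at h
  simpa only [prod_ite_eq', mem_univ, if_true] using h

lemma mean_prodMass_apply_mul_apply {p : ι → α → ℝ} (hp : ∀ i, p i ∈ stdSimplex ℝ α) {i j : ι}
    (hij : i ≠ j) (f g : α → ℝ) :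
    mean (prodMass p) (fun c => f (c i) * g (c j)) = mean (p i) f * mean (p j) g := by
  have h := mean_prodMass_prod p fun k a => (if k = i then f a else 1) * if k = j then g a else 1
  rw [Fintype.prod_eq_mul i j hij fun k hk => by
    simp only [hk.1, hk.2, if_false, mul_one, mean_const (hp k).2]] at h
  simpa only [prod_mul_distrib, prod_ite_eq', mem_univ, if_true, hij, hij.symm, if_false, mul_one,
    one_mul] using h

lemma mean_prodMass_sum_sq {p : ι → α → ℝ} (hp : ∀ i, p i ∈ stdSimplex ℝ α) {f : ι → α → ℝ}
    (hf : ∀ i, mean (p i) (f i) = 0) :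
    mean (prodMass p) (fun c => (∑ i, f i (c i)) ^ 2) = ∑ i, mean (p i) (fun a => f i a ^ 2) := by
  simp only [sq, sum_mul_sum, mean_sum]
  refine sum_congr rfl fun i _ => ?_
  rw [Fintype.sum_eq_single i fun j hj => ?_]
  · exact mean_prodMass_apply hp i fun a => f i a * f i a
  · rw [mean_prodMass_apply_mul_apply hp hj.symm, hf, zero_mul]

lemma mean_prodMass_cons {N : ℕ} (p : Fin (N + 1) → α → ℝ) (F : (Fin (N + 1) → α) → ℝ) :
    mean (prodMass p) F = mean (p 0) fun a =>
      mean (prodMass fun i => p i.succ) fun c => F (Fin.cons a c) := by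
  simp only [mean, mul_sum]
  rw [← (Fin.consEquiv fun _ => α).sum_comp, Fintype.sum_prod_type]
  refine sum_congr rfl fun a _ => sum_congr rfl fun c _ => ?_
  simp only [prodMass, Fin.consEquiv_apply, Fin.prod_univ_succ, Fin.cons_zero, Fin.cons_succ,
    mul_assoc]
  rfl

/-- The function `f` changes by at most `K i` when only the `i`-th argument changes. -/
def HasBoundedDifferences (f : (ι → α) → ℝ) (K : ι → ℝ) : Prop :=
  ∀ c i a, |f (Function.update c i a) - f c| ≤ K i

-- Conditioning on the first coordinate gives a one-variable function of range at most `K 0`.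
lemma mean_exp_le_of_hasBoundedDifferences {N : ℕ} {p : Fin N → α → ℝ}
    (hp : ∀ i, p i ∈ stdSimplex ℝ α) {f : (Fin N → α) → ℝ} {K : Fin N → ℝ}
    (hf : HasBoundedDifferences f K) (l : ℝ) :
    mean (prodMass p) (fun c => exp (l * f c)) ≤
      exp (l * mean (prodMass p) f + l ^ 2 * (∑ i, K i ^ 2) / 8) := by
  induction N with
  | zero => simp [mean, prodMass]
  | succ N ih =>
    set q : Fin N → α → ℝ := fun i => p i.succ
    have hq : prodMass q ∈ stdSimplex ℝ (Fin N → α) := prodMass_mem_stdSimplex fun i => hp i.succ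
    set g : α → ℝ := fun a => mean (prodMass q) fun c => f (Fin.cons a c)
    set V := ∑ i : Fin N, K i.succ ^ 2
    have hgK : ∀ a b, |g a - g b| ≤ K 0 := fun a b => calc
      |g a - g b| = |mean (prodMass q) fun c => f (Fin.cons a c) - f (Fin.cons b c)| :=
        congrArg _ (mean_sub _ _ _).symm
      _ ≤ mean (prodMass q) fun c => |f (Fin.cons a c) - f (Fin.cons b c)| := abs_mean_le hq.1 _
      _ ≤ mean (prodMass q) fun _ => K 0 := mean_mono hq.1 fun c => by
        simpa only [Fin.update_cons_zero] using hf (Fin.cons b c) 0 a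
      _ = K 0 := mean_const hq.2 _
    have hcond : ∀ a, mean (prodMass q) (fun c => exp (l * f (Fin.cons a c))) ≤
        exp (l ^ 2 * V / 8) * exp (l * g a) := fun a => by
      refine (ih (fun i => hp i.succ) fun c i b => ?_).trans_eq (by rw [exp_add, mul_comm])
      simpa only [Fin.cons_update] using hf (Fin.cons a c) i.succ b
    have hmean : mean (prodMass p) f = mean (p 0) g := mean_prodMass_cons p f
    have hV : ∑ i, K i ^ 2 = K 0 ^ 2 + V := Fin.sum_univ_succ _
    calc mean (prodMass p) (fun c => exp (l * f c))
        ≤ exp (l ^ 2 * V / 8) * mean (p 0) (fun a => exp (l * g a)) := by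
          rw [mean_prodMass_cons, ← mean_const_mul]
          exact mean_mono (hp 0).1 hcond
      _ ≤ exp (l ^ 2 * V / 8) * exp (l * mean (p 0) g + l ^ 2 * K 0 ^ 2 / 8) := by
          gcongr
          exact mean_exp_le_of_abs_sub_le (hp 0) hgK l
      _ = exp (l * mean (prodMass p) f + l ^ 2 * (∑ i, K i ^ 2) / 8) := by
          rw [← exp_add, hmean, hV]
          ring_nf

/-- McDiarmid's inequality. -/
theorem prob_gt_le_of_hasBoundedDifferences {N : ℕ} {p : Fin N → α → ℝ}
    (hp : ∀ i, p i ∈ stdSimplex ℝ α) {f : (Fin N → α) → ℝ} {K : Fin N → ℝ}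
    (hf : HasBoundedDifferences f K) {θ : ℝ} (hθ : mean (prodMass p) f ≤ θ) :
    prob (prodMass p) (fun c => f c > θ) ≤
      exp (-(2 * (θ - mean (prodMass p) f) ^ 2 / ∑ i, K i ^ 2)) := by
  set m := mean (prodMass p) f
  set V := ∑ i, K i ^ 2
  have hV : 0 ≤ V := sum_nonneg fun i _ => sq_nonneg (K i)
  -- The exponent `-l * (θ - m) + l ^ 2 * V / 8` is minimal at this `l`.
  set l := 4 * (θ - m) / V with hl
  have hl0 : 0 ≤ l := div_nonneg (by linarith) hV
  calc prob (prodMass p) (fun c => f c > θ)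
      ≤ exp (-(l * θ)) * mean (prodMass p) (fun c => exp (l * f c)) :=
        prob_gt_le_exp_mul_mean_exp (prodMass_mem_stdSimplex hp).1 f hl0 θ
    _ ≤ exp (-(l * θ)) * exp (l * m + l ^ 2 * V / 8) := by
        gcongr
        exact mean_exp_le_of_hasBoundedDifferences hp hf l
    _ = exp (-(2 * (θ - m) ^ 2 / V)) := by
        rw [← exp_add, hl]
        rcases eq_or_ne V 0 with h0 | _
        · simp only [h0, div_zero]; ring_nf
        · field_simp; ring_nf

end ProdMass

section SampleMean

variable {α : Type*} {N : ℕ}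

/-- The average of `f` over the entries of `c`. -/
def sampleMean (f : α → ℝ) (c : Fin N → α) : ℝ := 1 / (N : ℝ) * ∑ i, f (c i)

lemma sampleMean_add (f g : α → ℝ) (c : Fin N → α) :
    sampleMean (fun a => f a + g a) c = sampleMean f c + sampleMean g c := by
  simp only [sampleMean, sum_add_distrib, mul_add]

lemma sampleMean_nonneg {f : α → ℝ} (hf : ∀ a, 0 ≤ f a) (c : Fin N → α) : 0 ≤ sampleMean f c :=
  mul_nonneg (by positivity) (sum_nonneg fun i _ => hf (c i))

lemma sampleMean_sub_eq (hN : N ≠ 0) (f : α → ℝ) (c : Fin N → α) (m : ℝ) :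
    sampleMean f c - m = 1 / (N : ℝ) * ∑ i, (f (c i) - m) := by
  rw [sampleMean, sum_sub_distrib, sum_const, card_univ, Fintype.card_fin, nsmul_eq_mul]
  field_simp

lemma sampleMean_update_sub (f : α → ℝ) (c : Fin N → α) (i : Fin N) (a : α) :
    sampleMean f (Function.update c i a) - sampleMean f c = 1 / (N : ℝ) * (f a - f (c i)) := by
  rw [sampleMean, sampleMean, ← mul_sub, ← sum_sub_distrib, Fintype.sum_eq_single i fun j hj => by
    rw [Function.update_of_ne hj, sub_self], Function.update_self]

variable [Fintype α] {p : α → ℝ}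

/-- The mean absolute deviation from `mean p f` of the average of `f` over `N` independent
samples of `p`. -/
def meanDeviation (p : α → ℝ) (N : ℕ) (f : α → ℝ) : ℝ :=
  mean (prodMass fun _ : Fin N => p) fun c => |sampleMean f c - mean p f|

lemma mean_sampleMean (hp : p ∈ stdSimplex ℝ α) (hN : N ≠ 0) (f : α → ℝ) :
    mean (prodMass fun _ : Fin N => p) (sampleMean f) = mean p f := by
  unfold sampleMean
  simp only [mean_const_mul, mean_sum, mean_prodMass_apply (fun _ => hp), sum_const, card_univ,
    Fintype.card_fin, nsmul_eq_mul]
  field_simp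

lemma meanDeviation_add_le (hp : ∀ a, 0 ≤ p a) (f g : α → ℝ) :
    meanDeviation p N (fun a => f a + g a) ≤ meanDeviation p N f + meanDeviation p N g := by
  unfold meanDeviation
  rw [← mean_add]
  refine mean_mono (prodMass_nonneg fun _ => hp) fun c => ?_
  rw [sampleMean_add, mean_add, add_sub_add_comm]
  exact abs_add_le _ _

lemma meanDeviation_le_two_mul_mean (hp : p ∈ stdSimplex ℝ α) (hN : N ≠ 0) {f : α → ℝ}
    (hf : ∀ a, 0 ≤ f a) : meanDeviation p N f ≤ 2 * mean p f := by
  have hP : (prodMass fun _ : Fin N => p) ∈ stdSimplex ℝ _ := prodMass_mem_stdSimplex fun _ => hp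
  calc meanDeviation p N f
      ≤ mean (prodMass fun _ : Fin N => p) (fun c => sampleMean f c + mean p f) :=
        mean_mono hP.1 fun c => (abs_sub _ _).trans_eq <| by
          rw [abs_of_nonneg (sampleMean_nonneg hf c), abs_of_nonneg (mean_nonneg hp.1 hf)]
    _ = 2 * mean p f := by
        rw [mean_add, mean_sampleMean hp hN, mean_const hP.2, two_mul]

lemma meanDeviation_le_sqrt (hp : p ∈ stdSimplex ℝ α) (hN : N ≠ 0) (f : α → ℝ) :
    meanDeviation p N f ≤ √(mean p (fun a => f a ^ 2) / N) := by
  have hP : (prodMass fun _ : Fin N => p) ∈ stdSimplex ℝ _ := prodMass_mem_stdSimplex fun _ => hp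
  have hcentered : mean p (fun a => f a - mean p f) = 0 := by
    rw [mean_sub, mean_const hp.2, sub_self]
  refine (mean_abs_le_sqrt_mean_sq hP _).trans (Real.sqrt_le_sqrt ?_)
  calc mean (prodMass fun _ : Fin N => p) (fun c => (sampleMean f c - mean p f) ^ 2)
      = (1 / N) ^ 2 * (N * mean p fun a => (f a - mean p f) ^ 2) := by
        simp only [sampleMean_sub_eq hN, mul_pow, mean_const_mul]
        rw [mean_prodMass_sum_sq (fun _ => hp) fun _ => hcentered, sum_const, card_univ,
          Fintype.card_fin, nsmul_eq_mul]
    _ = (mean p fun a => (f a - mean p f) ^ 2) / N := by field_simp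
    _ ≤ mean p (fun a => f a ^ 2) / N := by
        gcongr
        exact mean_sub_mean_sq_le hp.2 f

lemma meanDeviation_le_of_truncation (hp : p ∈ stdSimplex ℝ α) (hN : N ≠ 0) {f : α → ℝ}
    (hf : ∀ a, 0 ≤ f a) {M : ℝ} (hM : 0 ≤ M) :
    meanDeviation p N f ≤
      √(M / N) * mean p f + 2 * mean p (fun a => if M * mean p f < f a then f a else 0) := by
  set m := mean p f
  have hm : 0 ≤ m := mean_nonneg hp.1 hf
  set large : α → ℝ := fun a => if M * m < f a then f a else 0
  set small : α → ℝ := fun a => if M * m < f a then 0 else f a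
  have hsplit : f = fun a => small a + large a := by
    funext a; simp only [small, large]; split_ifs <;> simp
  have hlarge : ∀ a, 0 ≤ large a := fun a => by
    simp only [large]; split_ifs <;> simp only [hf, le_refl]
  have hsmall : mean p (fun a => small a ^ 2) ≤ M * m * m := by
    rw [← mean_const_mul]
    refine mean_mono hp.1 fun a => ?_
    simp only [small]
    split_ifs with h
    · rw [zero_pow two_ne_zero]
      exact mul_nonneg (mul_nonneg hM hm) (hf a)
    · rw [sq]
      exact mul_le_mul_of_nonneg_right (not_lt.1 h) (hf a)
  calc meanDeviation p N f ≤ meanDeviation p N small + meanDeviation p N large :=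
        (congrArg (meanDeviation p N) hsplit).trans_le (meanDeviation_add_le hp.1 _ _)
    _ ≤ √(M * m * m / N) + 2 * mean p large := by
        gcongr
        · exact (meanDeviation_le_sqrt hp hN _).trans (by gcongr)
        · exact meanDeviation_le_two_mul_mean hp hN hlarge
    _ = √(M / N) * m + 2 * mean p large := by
        rw [show M * m * m / N = M / N * m ^ 2 by ring, Real.sqrt_mul (by positivity),
          Real.sqrt_sq hm]

end SampleMean

section OneShot

variable {α β : Type*} {p : α → ℝ} {w : α → β → ℝ} {N : ℕ}

/-- The joint mass function of an input with mass function `p` and its output through the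
channel `w`. -/
def jointMass (p : α → ℝ) (w : α → β → ℝ) (z : α × β) : ℝ := p z.1 * w z.1 z.2

/-- The output mass function of the channel `w` when its input is uniformly distributed over the
codebook `c`. -/
def inducedMass (w : α → β → ℝ) (c : Fin N → α) (b : β) : ℝ := sampleMean (fun a => w a b) c

lemma hasBoundedDifferences_TV_inducedMass [Fintype β] (hw : ∀ a, w a ∈ stdSimplex ℝ β)
    (q : β → ℝ) :
    HasBoundedDifferences (fun c : Fin N → α => TV (inducedMass w c) q) fun _ => 1 / (N : ℝ) := by
  intro c i a
  set c' := Function.update c i a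
  have hpoint : ∀ b, |(|inducedMass w c' b - q b| - |inducedMass w c b - q b|)| ≤
      1 / N * (w a b + w (c i) b) := fun b => calc
    _ ≤ |inducedMass w c' b - inducedMass w c b| := by
      simpa only [sub_sub_sub_cancel_right] using abs_abs_sub_abs_le_abs_sub
        (inducedMass w c' b - q b) (inducedMass w c b - q b)
    _ = 1 / N * |w a b - w (c i) b| := by
      rw [inducedMass, inducedMass, sampleMean_update_sub, abs_mul, abs_of_nonneg (by positivity)]
    _ ≤ 1 / N * (w a b + w (c i) b) := by
      gcongr
      simpa only [abs_of_nonneg, (hw _).1] using abs_sub (w a b) (w (c i) b)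
  calc |TV (inducedMass w c') q - TV (inducedMass w c) q|
      = |∑ b, (|inducedMass w c' b - q b| - |inducedMass w c b - q b|)| / 2 := by
        rw [TV, TV, ← sub_div, ← sum_sub_distrib, abs_div, abs_two]
    _ ≤ (∑ b, 1 / N * (w a b + w (c i) b)) / 2 := by
        gcongr
        exact (abs_sum_le_sum_abs _ _).trans (sum_le_sum fun b _ => hpoint b)
    _ = 1 / N := by
        rw [← mul_sum, sum_add_distrib, (hw a).2, (hw (c i)).2]
        ring

variable [Fintype α]

/-- The mass function of the output of the channel `w` when its input has mass function `p`. -/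
def outputMass (p : α → ℝ) (w : α → β → ℝ) (b : β) : ℝ := mean p fun a => w a b

lemma outputMass_nonneg (hp : ∀ a, 0 ≤ p a) (hw : ∀ a b, 0 ≤ w a b) (b : β) :
    0 ≤ outputMass p w b :=
  mean_nonneg hp fun a => hw a b

variable [Fintype β]

lemma sum_outputMass (hp : p ∈ stdSimplex ℝ α) (hw : ∀ a, ∑ b, w a b = 1) :
    ∑ b, outputMass p w b = 1 := by
  simp only [outputMass, ← mean_sum, hw, mean_const hp.2]

lemma jointMass_mem_stdSimplex (hp : p ∈ stdSimplex ℝ α) (hw : ∀ a, w a ∈ stdSimplex ℝ β) :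
    jointMass p w ∈ stdSimplex ℝ (α × β) := by
  refine ⟨fun z => mul_nonneg (hp.1 _) ((hw _).1 _), ?_⟩
  simp only [jointMass, Fintype.sum_prod_type, ← mul_sum, (hw _).2, mul_one, hp.2]

theorem mean_TV_inducedMass_le (hp : p ∈ stdSimplex ℝ α) (hw : ∀ a, w a ∈ stdSimplex ℝ β)
    (hN : N ≠ 0) {M : ℝ} (hM : 0 ≤ M) :
    mean (prodMass fun _ : Fin N => p) (fun c => TV (inducedMass w c) (outputMass p w)) ≤
      √(M / N) / 2 + prob (jointMass p w) (fun z => M * outputMass p w z.2 < w z.1 z.2) := by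
  set large : β → α → ℝ := fun b a => if M * outputMass p w b < w a b then w a b else 0
  have htail : prob (jointMass p w) (fun z => M * outputMass p w z.2 < w z.1 z.2) =
      ∑ b, mean p (large b) := by
    simp only [prob, mean, jointMass, Fintype.sum_prod_type_right, large, mul_ite, mul_zero]
  calc mean (prodMass fun _ : Fin N => p) (fun c => TV (inducedMass w c) (outputMass p w))
      = 2⁻¹ * ∑ b, meanDeviation p N fun a => w a b := by
        simp only [TV, div_eq_inv_mul, mean_const_mul, mean_sum]
        rfl
    _ ≤ 2⁻¹ * ∑ b, (√(M / N) * outputMass p w b + 2 * mean p (large b)) := by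
        gcongr with b
        exact meanDeviation_le_of_truncation hp hN (fun a => (hw a).1 b) hM
    _ = √(M / N) / 2 + prob (jointMass p w) (fun z => M * outputMass p w z.2 < w z.1 z.2) := by
        rw [htail, sum_add_distrib, ← mul_sum, ← mul_sum, sum_outputMass hp fun a => (hw a).2]
        ring

lemma prob_TV_inducedMass_gt_le (hp : p ∈ stdSimplex ℝ α) (hw : ∀ a, w a ∈ stdSimplex ℝ β)
    {q : β → ℝ} {θ : ℝ} (hθ : 0 ≤ θ)
    (hmean : mean (prodMass fun _ : Fin N => p) (fun c => TV (inducedMass w c) q) ≤ θ / 2) :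
    prob (prodMass fun _ : Fin N => p) (fun c => TV (inducedMass w c) q > θ) ≤
      exp (-(N * θ ^ 2 / 2)) := by
  refine (prob_gt_le_of_hasBoundedDifferences (fun _ => hp)
    (hasBoundedDifferences_TV_inducedMass hw q) (by linarith)).trans ?_
  set m := mean (prodMass fun _ : Fin N => p) fun c => TV (inducedMass w c) q
  rw [exp_le_exp, neg_le_neg_iff, sum_const, card_univ, Fintype.card_fin, nsmul_eq_mul]
  calc N * θ ^ 2 / 2 = 2 * N * (θ / 2) ^ 2 := by ring
    _ ≤ 2 * N * (θ - m) ^ 2 := by gcongr; linarith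
    _ = 2 * (θ - m) ^ 2 / (N * (1 / N) ^ 2) := by
      rcases eq_or_ne N 0 with rfl | hN
      · simp
      · field_simp

end OneShot

section LikelihoodRatio

lemma mean_pushf {α β : Type*} [Fintype α] [Fintype β] (p : α → ℝ) (f : α → β) (g : β → ℝ) :
    mean (pushf p f) g = mean p fun a => g (f a) := by
  simp only [mean, pushf, sum_mul, ite_mul, zero_mul]
  rw [sum_comm]
  simp only [sum_ite_eq, mem_univ, if_true]

lemma entRV_mul_log_two {α β : Type*} [Fintype α] [Fintype β] (p : α → ℝ) (f : α → β) :
    entRV p f * log 2 = -mean p fun a => log (pushf p f (f a)) := by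
  rw [← mean_pushf p f fun b => log (pushf p f b), entRV, ent, neg_mul, mean, sum_mul]
  simp only [logb, mul_assoc, div_mul_cancel₀ _ (log_pos one_lt_two).ne']

variable {α β : Type*} [Fintype α] {p : α → ℝ} {w : α → β → ℝ}

/-- The likelihood ratio of the joint mass function to the product of its marginals, whose
logarithm is the information density. It takes the junk value `0` where `outputMass p w` vanishes,
but the joint mass function vanishes there as well. -/
def likelihoodRatio (p : α → ℝ) (w : α → β → ℝ) (z : α × β) : ℝ := w z.1 z.2 / outputMass p w z.2

lemma likelihoodRatio_nonneg (hp : ∀ a, 0 ≤ p a) (hw : ∀ a b, 0 ≤ w a b) (z : α × β) :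
    0 ≤ likelihoodRatio p w z :=
  div_nonneg (hw _ _) (outputMass_nonneg hp hw _)

lemma outputMass_pos (hp : ∀ a, 0 ≤ p a) (hw : ∀ a b, 0 ≤ w a b) {z : α × β}
    (hz : jointMass p w z ≠ 0) : 0 < outputMass p w z.2 :=
  ((mul_nonneg (hp _) (hw _ _)).lt_of_ne' hz).trans_le <|
    single_le_sum (f := fun a => p a * w a z.2) (fun a _ => mul_nonneg (hp a) (hw a _))
      (mem_univ z.1)

lemma likelihoodRatio_pos (hp : ∀ a, 0 ≤ p a) (hw : ∀ a b, 0 ≤ w a b) {z : α × β}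
    (hz : jointMass p w z ≠ 0) : 0 < likelihoodRatio p w z :=
  div_pos ((hw _ _).lt_of_ne' (right_ne_zero_of_mul hz)) (outputMass_pos hp hw hz)

variable [Fintype β]

lemma mi_jointMass_mul_log_two (hp : ∀ a, 0 ≤ p a) (hw : ∀ a, w a ∈ stdSimplex ℝ β) :
    mi (jointMass p w) Prod.fst Prod.snd * log 2 =
      mean (jointMass p w) (fun z => log (likelihoodRatio p w z)) := by
  have hfst : pushf (jointMass p w) Prod.fst = p := by
    funext a
    simp only [pushf, jointMass, Fintype.sum_prod_type]
    rw [Fintype.sum_eq_single a fun a' ha => by simp only [ha, if_false, sum_const_zero]]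
    simp only [if_true, ← mul_sum, (hw a).2, mul_one]
  have hsnd : pushf (jointMass p w) Prod.snd = outputMass p w := by
    funext b
    simp only [pushf, jointMass, outputMass, mean, Fintype.sum_prod_type, sum_ite_eq', mem_univ,
      if_true]
  have hpair : pushf (jointMass p w) (fun z => (z.1, z.2)) = jointMass p w := by
    funext z
    simp only [pushf, Prod.mk.eta, sum_ite_eq', mem_univ, if_true]
  rw [mi, sub_mul, add_mul, entRV_mul_log_two, entRV_mul_log_two, entRV_mul_log_two, hfst, hsnd,
    hpair, ← neg_add, ← mean_add, neg_sub_neg, ← mean_sub]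
  refine mean_congr fun z hz => ?_
  have hpz : p z.1 ≠ 0 := left_ne_zero_of_mul hz
  have hwz : w z.1 z.2 ≠ 0 := right_ne_zero_of_mul hz
  have hout : outputMass p w z.2 ≠ 0 := (outputMass_pos hp (fun a => (hw a).1) hz).ne'
  rw [Prod.mk.eta, jointMass, likelihoodRatio, log_mul hpz hwz, log_div hwz hout]
  ring

lemma mean_log_likelihoodRatio_nonneg (hp : p ∈ stdSimplex ℝ α) (hw : ∀ a, w a ∈ stdSimplex ℝ β) :
    0 ≤ mean (jointMass p w) (fun z => log (likelihoodRatio p w z)) := by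
  have hw0 : ∀ a b, 0 ≤ w a b := fun a => (hw a).1
  have hpoint : ∀ z : α × β, jointMass p w z - p z.1 * outputMass p w z.2 ≤
      jointMass p w z * log (likelihoodRatio p w z) := fun z => by
    by_cases hz : jointMass p w z = 0
    · rw [hz, zero_mul, zero_sub, neg_nonpos]
      exact mul_nonneg (hp.1 _) (outputMass_nonneg hp.1 hw0 _)
    · have hlog := one_sub_inv_le_log_of_pos (likelihoodRatio_pos hp.1 hw0 hz)
      refine le_of_eq_of_le ?_
        (mul_le_mul_of_nonneg_left hlog ((jointMass_mem_stdSimplex hp hw).1 z))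
      have := right_ne_zero_of_mul hz
      rw [likelihoodRatio, jointMass]
      field_simp
  refine le_trans (le_of_eq ?_) (sum_le_sum fun z _ => hpoint z)
  simp only [sum_sub_distrib, (jointMass_mem_stdSimplex hp hw).2, Fintype.sum_prod_type, ← mul_sum,
    sum_outputMass hp fun a => (hw a).2, mul_one, hp.2, sub_self]

lemma prob_jointMass_lt_le (hp : p ∈ stdSimplex ℝ α) (hw : ∀ a, w a ∈ stdSimplex ℝ β) {s M : ℝ}
    (hs : 0 ≤ s) (hM : 0 < M) :
    prob (jointMass p w) (fun z => M * outputMass p w z.2 < w z.1 z.2) ≤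
      mean (jointMass p w) (fun z => likelihoodRatio p w z ^ s) / M ^ s := by
  have hw0 : ∀ a b, 0 ≤ w a b := fun a => (hw a).1
  have hratio : ∀ z, 0 ≤ likelihoodRatio p w z := likelihoodRatio_nonneg hp.1 hw0
  rw [div_eq_inv_mul, ← mean_const_mul]
  refine prob_le_mean (jointMass_mem_stdSimplex hp hw).1 (fun z => ?_) fun z hz hlt => ?_
  · have := hratio z; positivity
  · rw [← div_eq_inv_mul, ← div_rpow (hratio z) hM.le]
    refine one_le_rpow ?_ hs
    rw [one_le_div hM, likelihoodRatio, le_div_iff₀ (outputMass_pos hp.1 hw0 hz)]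
    exact hlt.le

end LikelihoodRatio

section Memoryless

variable {ι α β : Type*} [Fintype ι]

/-- The channel whose output letters are produced independently, each by passing the input letter
in the same position through `w`. -/
def memoryless (w : α → β → ℝ) (a : ι → α) : (ι → β) → ℝ := prodMass fun i => w (a i)

variable [DecidableEq ι] {p : α → ℝ} {w : α → β → ℝ}

lemma memoryless_mem_stdSimplex [Fintype β] (hw : ∀ a, w a ∈ stdSimplex ℝ β) (a : ι → α) :
    memoryless w a ∈ stdSimplex ℝ (ι → β) :=
  prodMass_mem_stdSimplex fun i => hw (a i)

variable [Fintype α]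

lemma outputMass_memoryless :
    outputMass (prodMass fun _ : ι => p) (memoryless w) = prodMass fun _ => outputMass p w :=
  funext fun b => mean_prodMass_prod _ fun i a => w a (b i)

variable [Fintype β]

lemma mean_likelihoodRatio_memoryless_rpow (hp : ∀ a, 0 ≤ p a) (hw : ∀ a b, 0 ≤ w a b) (s : ℝ) :
    mean (jointMass (prodMass fun _ : ι => p) (memoryless w))
        (fun z => likelihoodRatio (prodMass fun _ : ι => p) (memoryless w) z ^ s) =
      mean (jointMass p w) (fun z => likelihoodRatio p w z ^ s) ^ Fintype.card ι := by
  rw [← card_univ, ← prod_const, ← mean_prodMass_prod, mean,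
    ← (Equiv.arrowProdEquivProdArrow ι (fun _ => α) fun _ => β).sum_comp]
  refine sum_congr rfl fun z _ => ?_
  congr 1
  · simp only [jointMass, prodMass, memoryless, prod_mul_distrib]
    rfl
  · beta_reduce
    rw [finsetProd_rpow _ _ fun i _ => likelihoodRatio_nonneg hp hw _, likelihoodRatio,
      outputMass_memoryless]
    simp only [likelihoodRatio, prodMass, memoryless, prod_div_distrib]
    rfl

end Memoryless

lemma exists_mean_rpow_lt_exp {α : Type*} [Fintype α] {p f : α → ℝ} (hp : ∑ a, p a = 1)
    (hf : ∀ a, p a ≠ 0 → 0 < f a) {r : ℝ} (hr : mean p (fun a => log (f a)) < r) :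
    ∃ s > 0, mean p (fun a => f a ^ s) < exp (s * r) := by
  have hterm : ∀ a, HasDerivAt (fun s : ℝ => p a * f a ^ s) (p a * log (f a)) 0 := fun a => by
    by_cases ha : p a = 0
    · simpa only [ha, zero_mul] using hasDerivAt_const (0 : ℝ) (0 : ℝ)
    · simpa only [rpow_zero, one_mul] using
        (hasStrictDerivAt_const_rpow (hf a ha) 0).hasDerivAt.const_mul (p a)
  have hmean : HasDerivAt (fun s : ℝ => mean p fun a => f a ^ s) (mean p fun a => log (f a)) 0 :=
    HasDerivAt.fun_sum fun a _ => hterm a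
  have hexp : HasDerivAt (fun s : ℝ => exp (s * r)) r 0 := by
    simpa only [id, zero_mul, exp_zero, one_mul] using ((hasDerivAt_id (0 : ℝ)).mul_const r).exp
  have hslope := (hmean.sub hexp).tendsto_slope_zero_right
  obtain ⟨s, hneg, hs : 0 < s⟩ :=
    ((hslope.eventually (gt_mem_nhds (sub_neg.2 hr))).and self_mem_nhdsWithin).exists
  refine ⟨s, hs, ?_⟩
  simp only [Pi.sub_apply, zero_add, rpow_zero, mean_const hp, zero_mul, exp_zero, sub_self,
    sub_zero, smul_eq_mul] at hneg
  exact sub_neg.1 (neg_of_mul_neg_right hneg (inv_nonneg.2 hs.le))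

lemma eventually_const_mul_exp_le {a b : ℝ} (hab : a < b) (C : ℝ) :
    ∀ᶠ n : ℕ in atTop, C * exp (a * n) ≤ exp (b * n) := by
  have hlim : Tendsto (fun n : ℕ => exp ((b - a) * n)) atTop atTop :=
    tendsto_exp_atTop.comp <|
      tendsto_natCast_atTop_atTop.const_mul_atTop (sub_pos.2 hab)
  filter_upwards [hlim.eventually_ge_atTop C] with n hn
  calc C * exp (a * n) ≤ exp ((b - a) * n) * exp (a * n) := by gcongr
    _ = exp (b * n) := by rw [← exp_add]; ring_nf

section SoftCovering

variable {α β : Type*} [Fintype α] [Fintype β] {p : α → ℝ} {w : α → β → ℝ}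

-- A Chernoff bound for the information density, which is additive over the letters.
lemma exists_prob_jointMass_memoryless_lt_le (hp : p ∈ stdSimplex ℝ α)
    (hw : ∀ a, w a ∈ stdSimplex ℝ β) {r : ℝ}
    (hr : mean (jointMass p w) (fun z => log (likelihoodRatio p w z)) < r) :
    ∃ d > 0, ∀ n : ℕ, prob (jointMass (prodMass fun _ : Fin n => p) (memoryless w))
      (fun z => exp (r * n) * outputMass (prodMass fun _ : Fin n => p) (memoryless w) z.2 <
        memoryless w z.1 z.2) ≤ exp (-d * n) := by
  have hw0 : ∀ a b, 0 ≤ w a b := fun a => (hw a).1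
  obtain ⟨r', hr', hr'r⟩ := exists_between hr
  obtain ⟨s, hs, hmoment⟩ := exists_mean_rpow_lt_exp (jointMass_mem_stdSimplex hp hw).2
    (fun z hz => likelihoodRatio_pos hp.1 hw0 hz) hr'
  refine ⟨s * (r - r'), mul_pos hs (sub_pos.2 hr'r), fun n => ?_⟩
  calc _ ≤ mean (jointMass p w) (fun z => likelihoodRatio p w z ^ s) ^ n / exp (r * n) ^ s := by
        simpa only [mean_likelihoodRatio_memoryless_rpow hp.1 hw0, Fintype.card_fin] using
          prob_jointMass_lt_le (prodMass_mem_stdSimplex fun _ : Fin n => hp)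
            (memoryless_mem_stdSimplex hw) hs.le (exp_pos (r * n))
    _ ≤ exp (s * r') ^ n / exp (r * n) ^ s := by
        gcongr
        exact mean_nonneg (jointMass_mem_stdSimplex hp hw).1 fun z =>
          rpow_nonneg (likelihoodRatio_nonneg hp.1 hw0 z) s
    _ = exp (-(s * (r - r')) * n) := by
        rw [← exp_nat_mul, ← exp_mul, ← exp_sub]
        ring_nf

theorem exists_mean_TV_memoryless_le (hp : p ∈ stdSimplex ℝ α) (hw : ∀ a, w a ∈ stdSimplex ℝ β)
    {L : ℝ} (hL : mean (jointMass p w) (fun z => log (likelihoodRatio p w z)) < L) :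
    ∃ d > 0, ∀ n N : ℕ, exp (L * n) ≤ N →
      mean (prodMass fun _ : Fin N => prodMass fun _ : Fin n => p)
          (fun c => TV (inducedMass (memoryless w) c) (prodMass fun _ => outputMass p w)) ≤
        3 / 2 * exp (-d * n) := by
  obtain ⟨r, hr, hrL⟩ := exists_between hL
  obtain ⟨d, hd, htail⟩ := exists_prob_jointMass_memoryless_lt_le hp hw hr
  refine ⟨min ((L - r) / 2) d, lt_min (half_pos (sub_pos.2 hrL)) hd, fun n N hN => ?_⟩
  have hN0 : N ≠ 0 := Nat.cast_ne_zero.1 ((exp_pos _).trans_le hN).ne'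
  have hsqrt : √(exp (r * n) / N) ≤ exp (-((L - r) / 2) * n) := by
    refine Real.sqrt_le_iff.2 ⟨(exp_pos _).le, ?_⟩
    calc exp (r * n) / N ≤ exp (r * n) / exp (L * n) := by gcongr
      _ = exp (-((L - r) / 2) * n) ^ 2 := by
        rw [← exp_sub, ← exp_nat_mul]
        push_cast
        ring_nf
  calc _ ≤ √(exp (r * n) / N) / 2 + exp (-d * n) := by
        rw [← outputMass_memoryless]
        exact (mean_TV_inducedMass_le (prodMass_mem_stdSimplex fun _ => hp)
          (memoryless_mem_stdSimplex hw) hN0 (exp_pos _).le).trans (by gcongr; exact htail n)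
    _ ≤ exp (-min ((L - r) / 2) d * n) / 2 + exp (-min ((L - r) / 2) d * n) := by
        gcongr
        · exact hsqrt.trans (by gcongr; exact min_le_left _ _)
        · exact min_le_right _ _
    _ = 3 / 2 * exp (-min ((L - r) / 2) d * n) := by ring

theorem exists_eventually_prob_TV_memoryless_gt_le (hp : p ∈ stdSimplex ℝ α)
    (hw : ∀ a, w a ∈ stdSimplex ℝ β) {L : ℝ}
    (hL : mean (jointMass p w) (fun z => log (likelihoodRatio p w z)) < L) {C : ℝ} (hC : 0 < C) :
    ∃ γ₁ > 0, ∃ γ₂ > 0, ∀ᶠ n : ℕ in atTop, ∀ N : ℕ, exp (L * n) ≤ N →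
      prob (prodMass fun _ : Fin N => prodMass fun _ : Fin n => p)
          (fun c => TV (inducedMass (memoryless w) c) (prodMass fun _ => outputMass p w) >
            C * exp (-γ₁ * n)) ≤
        exp (-exp (γ₂ * n)) := by
  have hL0 : 0 < L := (mean_log_likelihoodRatio_nonneg hp hw).trans_lt hL
  obtain ⟨d, hd, hmean⟩ := exists_mean_TV_memoryless_le hp hw hL
  obtain ⟨γ, hγ, hγd, hγL⟩ : ∃ γ > 0, γ < d ∧ γ < L / 4 := by
    simpa only [lt_min_iff] using exists_between (lt_min hd (by positivity : 0 < L / 4))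
  refine ⟨γ, hγ, L / 4, by positivity, ?_⟩
  filter_upwards [eventually_const_mul_exp_le (neg_lt_neg hγd) (3 / C),
    eventually_const_mul_exp_le (by linarith : L / 4 < L - 2 * γ) (2 / C ^ 2)] with n hθ hexp N hN
  refine (prob_TV_inducedMass_gt_le (prodMass_mem_stdSimplex fun _ => hp)
    (memoryless_mem_stdSimplex hw) (by positivity) ((hmean n N hN).trans ?_)).trans ?_
  · calc 3 / 2 * exp (-d * n) = C / 2 * (3 / C * exp (-d * n)) := by field_simp
      _ ≤ C / 2 * exp (-γ * n) := by gcongr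
      _ = C * exp (-γ * n) / 2 := by ring
  · rw [exp_le_exp, neg_le_neg_iff]
    calc exp (L / 4 * n) = C ^ 2 / 2 * (2 / C ^ 2 * exp (L / 4 * n)) := by field_simp
      _ ≤ C ^ 2 / 2 * exp ((L - 2 * γ) * n) := by gcongr
      _ = exp (L * n) * (C * exp (-γ * n)) ^ 2 / 2 := by
        rw [mul_pow, ← exp_nat_mul, mul_left_comm, ← exp_add]
        push_cast
        ring_nf
      _ ≤ N * (C * exp (-γ * n)) ^ 2 / 2 := by gcongr

end SoftCovering

/-- **Strong soft-covering lemma (doubly-exponential concentration).**  Let `P_U` be a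
pmf on a finite set `U` and `W = W_{X|U}` a conditional pmf with output marginal `P_X`.
For each `n`, draw a random codebook of `N_n = ⌈2^{nR}⌉` codewords i.i.d. from
`P_U^{⊗n}` and let `P̂_{Xⁿ}` be the induced output pmf.  If `R > I(U;X)`, then there
exist `γ₁, γ₂ > 0` such that for all sufficiently large `n`,
`P(V(P̂_{Xⁿ}, P_X^{⊗n}) > (1/√2) e^{−γ₁ n}) ≤ e^{−e^{γ₂ n}}`. -/
theorem strong_soft_covering
    {U X : Type*} [Fintype U] [Fintype X]
    (PU : U → ℝ) (W : U → X → ℝ)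
    (hPU0 : ∀ u, 0 ≤ PU u) (hPU1 : ∑ u, PU u = 1)
    (hW0 : ∀ u x, 0 ≤ W u x) (hW1 : ∀ u, ∑ x, W u x = 1)
    (R : ℝ)
    (hR : R > mi (fun z : U × X => PU z.1 * W z.1 z.2) Prod.fst Prod.snd) :
    ∃ γ₁ > (0 : ℝ), ∃ γ₂ > (0 : ℝ), ∀ᶠ n : ℕ in atTop,
      (∑ c : Fin (⌈(2 : ℝ) ^ ((n : ℝ) * R)⌉₊) → Fin n → U,
        if TV (fun xn : Fin n → X =>
                (1 / ((⌈(2 : ℝ) ^ ((n : ℝ) * R)⌉₊ : ℕ) : ℝ)) *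
                  ∑ i, ∏ t, W (c i t) (xn t))
              (fun xn : Fin n → X => ∏ t, ∑ u, PU u * W u (xn t))
            > (1 / Real.sqrt 2) * Real.exp (-γ₁ * (n : ℝ))
        then ∏ i, ∏ t, PU (c i t) else 0)
        ≤ Real.exp (-Real.exp (γ₂ * (n : ℝ))) := by
  have hp : PU ∈ stdSimplex ℝ U := ⟨hPU0, hPU1⟩
  have hw : ∀ u, W u ∈ stdSimplex ℝ X := fun u => ⟨hW0 u, hW1 u⟩
  have hL : mean (jointMass PU W) (fun z => log (likelihoodRatio PU W z)) < log 2 * R := by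
    rw [← mi_jointMass_mul_log_two hPU0 hw, mul_comm (log 2)]
    exact mul_lt_mul_of_pos_right hR (log_pos one_lt_two)
  obtain ⟨γ₁, hγ₁, γ₂, hγ₂, hbound⟩ :=
    exists_eventually_prob_TV_memoryless_gt_le hp hw hL (by positivity : 0 < 1 / √2)
  refine ⟨γ₁, hγ₁, γ₂, hγ₂, hbound.mono fun n hn => hn ⌈(2 : ℝ) ^ ((n : ℝ) * R)⌉₊ ?_⟩
  rw [mul_assoc, mul_comm R, ← rpow_def_of_pos two_pos]
  exact Nat.le_ceil _
end
end

section
/- Uniform-over-messages soft covering via union bound (semantic secrecy step of the achievability proof). Let U, Y be finite sets, P_U a pmf on U, W_{Y|U} a conditional pmf, P_Y the induced output marginal, and I(U;Y) the mutual information under P_U · W_{Y|U}. For each n, let {U^n(m, ℓ) : m ∈ [1 : ⌈2^{nR}⌉], ℓ ∈ [1 : ⌈2^{nR'}⌉]} be a codebook of codewords drawn independently, each from P_U^{⊗n}, and for each m let Q̂^m_{Y^n}(y^n) = (1/⌈2^{nR'}⌉) Σ_ℓ ∏_{t=1}^n W_{Y|U}(y_t | U_t(m, ℓ)). If R' > I(U;Y),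 then there exist γ₁ > 0 and γ₂ > 0 such that for all sufficiently large n, P( max_m V(Q̂^m_{Y^n}, P_Y^{⊗n}) > (1/√2) e^{−γ₁ n} ) ≤ ⌈2^{nR}⌉ · e^{−e^{γ₂ n}}; in particular this probability tends to 0 as n → ∞. -/
open Finset Filter Real

noncomputable section

open scoped Classical

/-!
Write `u = exp (γ n)`. For a single message, the expected total variation distance between the
output of the random codebook and the true output is at most `u⁻²`, up to a constant: truncate
the likelihood ratio `Wⁿ(y|x) / P_Yⁿ(y)` at `exp (n r)` with `I(U;Y) < r < R' log 2`. The truncated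
part has variance at most `exp (n r) / M ≤ u⁻⁴`, where `M` is the number of codewords, and the
rest has mass exponentially small by Chernoff's bound, since the mean of the information density
is `I(U;Y) < r`. Replacing one codeword moves the distance by at most `1 / M`, so by McDiarmid's
inequality the distance exceeds its mean by a multiple of `u⁻¹` with probability at most
`exp (-u)`. This doubly exponential bound absorbs the union over the exponentially many messages.
-/

namespace SoftCovering

variable {ι κ A B : Type*}

section Mean

/-- Expectation of the random variable `X` under the mass function `p`. -/
def mean [Fintype A] (p X : A → ℝ) : ℝ := ∑ a, p a * X a

/-- Probability of the event `E` under the mass function `p`. -/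
def prob [Fintype A] (p : A → ℝ) (E : A → Prop) : ℝ := ∑ a, if E a then p a else 0

variable [Fintype A] [Fintype B] {p X Y : A → ℝ}

lemma mean_add (p X Y : A → ℝ) : mean p (fun a => X a + Y a) = mean p X + mean p Y := by
  simp only [mean, mul_add, sum_add_distrib]

lemma mean_sub (p X Y : A → ℝ) : mean p (fun a => X a - Y a) = mean p X - mean p Y := by
  simp only [mean, mul_sub, sum_sub_distrib]

lemma mean_const_mul (p X : A → ℝ) (c : ℝ) : mean p (fun a => c * X a) = c * mean p X := by
  simp only [mean, mul_sum, mul_left_comm]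

lemma mean_sum (p : A → ℝ) (X : B → A → ℝ) :
    mean p (fun a => ∑ b, X b a) = ∑ b, mean p (X b) := by
  simp only [mean, mul_sum]
  exact sum_comm

lemma mean_const (hp : ∑ a, p a = 1) (c : ℝ) : mean p (fun _ => c) = c := by
  rw [mean, ← sum_mul, hp, one_mul]

lemma mean_comm (p : A → ℝ) (q : B → ℝ) (F : A → B → ℝ) :
    mean p (fun a => mean q (F a)) = mean q (fun b => mean p (F · b)) := by
  simp only [mean, mul_sum]
  rw [sum_comm]
  exact sum_congr rfl fun b _ => sum_congr rfl fun a _ => mul_left_comm _ _ _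

lemma mean_mono (hp : ∀ a, 0 ≤ p a) (h : ∀ a, X a ≤ Y a) : mean p X ≤ mean p Y :=
  sum_le_sum fun a _ => mul_le_mul_of_nonneg_left (h a) (hp a)

lemma mean_nonneg (hp : ∀ a, 0 ≤ p a) (hX : ∀ a, 0 ≤ X a) : 0 ≤ mean p X :=
  sum_nonneg fun a _ => mul_nonneg (hp a) (hX a)

lemma abs_mean_le (hp : p ∈ stdSimplex ℝ A) {c : ℝ} (h : ∀ a, |X a| ≤ c) : |mean p X| ≤ c := by
  refine abs_le.2 ⟨?_, ?_⟩
  · simpa only [mean_const hp.2] using mean_mono hp.1 fun a => (abs_le.1 (h a)).1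
  · simpa only [mean_const hp.2] using mean_mono hp.1 fun a => (abs_le.1 (h a)).2

lemma map_mean_le_of_convexOn (hp : p ∈ stdSimplex ℝ A) {φ : ℝ → ℝ}
    (hφ : ConvexOn ℝ Set.univ φ) (X : A → ℝ) : φ (mean p X) ≤ mean p (fun a => φ (X a)) := by
  simpa only [mean, smul_eq_mul] using
    hφ.map_sum_le (fun a _ => hp.1 a) hp.2 (fun a _ => Set.mem_univ (X a))

lemma mean_abs_le_sqrt_mean_sq (hp : p ∈ stdSimplex ℝ A) (X : A → ℝ) :
    mean p (fun a => |X a|) ≤ √(mean p (fun a => X a ^ 2)) := by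
  refine Real.le_sqrt_of_sq_le ?_
  simpa only [sq_abs] using map_mean_le_of_convexOn hp even_two.convexOn_pow fun a => |X a|

lemma prob_eq_mean (p : A → ℝ) (E : A → Prop) :
    prob p E = mean p (fun a => if E a then 1 else 0) := by
  simp only [prob, mean, mul_ite, mul_one, mul_zero]

lemma prob_mono (hp : ∀ a, 0 ≤ p a) {E F : A → Prop} (h : ∀ a, 0 < p a → E a → F a) :
    prob p E ≤ prob p F := by
  refine sum_le_sum fun a _ => ?_
  rcases (hp a).eq_or_lt with h0 | hpos
  · simp only [← h0, ite_self, le_refl]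
  · split_ifs with hE hF
    exacts [le_rfl, absurd (h a hpos hE) hF, hp a, le_rfl]

lemma prob_comp_equiv (e : B ≃ A) (p : A → ℝ) (E : A → Prop) :
    prob (fun b => p (e b)) (fun b => E (e b)) = prob p E :=
  e.sum_comp fun a => if E a then p a else 0

lemma prob_exists_le [Fintype κ] (hp : ∀ a, 0 ≤ p a) (E : κ → A → Prop) :
    prob p (fun a => ∃ k, E k a) ≤ ∑ k, prob p (E k) := by
  simp only [prob]
  rw [sum_comm]
  refine sum_le_sum fun a _ => ?_
  have hterm : ∀ k ∈ univ, 0 ≤ if E k a then p a else 0 := fun k _ => ite_nonneg (hp a) le_rfl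
  split_ifs with h
  · obtain ⟨k, hk⟩ := h
    simpa only [if_pos hk] using single_le_sum hterm (mem_univ k)
  · exact sum_nonneg hterm

lemma prob_ge_le_exp_mul_mean_exp (hp : ∀ a, 0 ≤ p a) (X : A → ℝ) {s : ℝ} (hs : 0 ≤ s) (r : ℝ) :
    prob p (fun a => r ≤ X a) ≤ exp (-(s * r)) * mean p (fun a => exp (s * X a)) := by
  rw [prob_eq_mean, ← mean_const_mul]
  refine mean_mono hp fun a => ?_
  rw [← exp_add]
  split_ifs with h
  · exact one_le_exp (by linarith [mul_le_mul_of_nonneg_left h hs])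
  · exact (exp_pos _).le

end Mean

section ProdMass

/-- Mass function of a vector with independent entries, the `i`-th one distributed as `p i`. -/
def prodMass [Fintype ι] (p : ι → A → ℝ) (x : ι → A) : ℝ := ∏ i, p i (x i)

variable [Fintype ι] [DecidableEq ι] [Fintype A]

lemma mean_prodMass_prod (p f : ι → A → ℝ) :
    mean (prodMass p) (fun x => ∏ i, f i (x i)) = ∏ i, mean (p i) (f i) := by
  simp only [mean, prodMass, ← prod_mul_distrib]
  exact (Fintype.prod_sum fun i a => p i a * f i a).symm

lemma prodMass_mem_stdSimplex {p : ι → A → ℝ} (hp : ∀ i, p i ∈ stdSimplex ℝ A) :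
    prodMass p ∈ stdSimplex ℝ (ι → A) := by
  refine ⟨fun x => prod_nonneg fun i _ => (hp i).1 _, ?_⟩
  simp only [prodMass]
  rw [← Fintype.prod_sum]
  exact prod_eq_one fun i _ => (hp i).2

lemma mean_prodMass_apply {p : ι → A → ℝ} (hp : ∀ i, ∑ a, p i a = 1) (i : ι) (f : A → ℝ) :
    mean (prodMass p) (fun x => f (x i)) = mean (p i) f := by
  have h := mean_prodMass_prod p (Function.update (fun _ _ => 1) i f)
  have hother : ∀ j ∈ univ.erase i, Function.update (fun _ _ => 1) i f j = fun _ => 1 :=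
    fun j hj => Function.update_of_ne (ne_of_mem_erase hj) _ _
  rw [← mul_prod_erase _ _ (mem_univ i), Function.update_self,
    prod_eq_one fun j hj => by rw [hother j hj, mean_const (hp j)], mul_one] at h
  rw [← h]
  congr 1
  funext x
  rw [← mul_prod_erase _ _ (mem_univ i), Function.update_self,
    prod_eq_one fun j hj => by rw [hother j hj], mul_one]

lemma prob_prodMass_apply {p : ι → A → ℝ} (hp : ∀ i, ∑ a, p i a = 1) (i : ι) (E : A → Prop) :
    prob (prodMass p) (fun x => E (x i)) = prob (p i) E := by
  simp only [prob_eq_mean]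
  exact mean_prodMass_apply hp i fun a => if E a then 1 else 0

lemma prob_prodMass_exists_le {p : ι → A → ℝ} (hp : ∀ i, p i ∈ stdSimplex ℝ A)
    (E : ι → A → Prop) :
    prob (prodMass p) (fun x => ∃ i, E i (x i)) ≤ ∑ i, prob (p i) (E i) := by
  refine (prob_exists_le (prodMass_mem_stdSimplex hp).1 _).trans_eq ?_
  exact sum_congr rfl fun i _ => prob_prodMass_apply (fun j => (hp j).2) i (E i)

lemma prob_prodMass_curry [Fintype κ] [DecidableEq κ] (p : ι × κ → A → ℝ)
    (E : (ι → κ → A) → Prop) :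
    prob (prodMass p) (fun x => E (Function.curry x)) =
      prob (prodMass fun i => prodMass fun k => p (i, k)) E := by
  rw [← prob_comp_equiv (Equiv.curry ι κ A) _ E]
  congr 1
  funext x
  exact Fintype.prod_prod_type _

lemma prob_prodMass_exists_row_le [Fintype κ] [DecidableEq κ] {p : A → ℝ}
    (hp : p ∈ stdSimplex ℝ A) (E : (κ → A) → Prop) :
    prob (prodMass fun _ : ι × κ => p) (fun c => ∃ i, E fun k => c (i, k)) ≤
      Fintype.card ι * prob (prodMass fun _ : κ => p) E := by
  refine (prob_prodMass_curry (fun _ : ι × κ => p) fun c => ∃ i, E (c i)).trans_le ?_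
  refine (prob_prodMass_exists_le (fun _ => prodMass_mem_stdSimplex fun _ => hp)
    fun _ => E).trans_eq ?_
  rw [sum_const, card_univ, nsmul_eq_mul]

lemma mean_prodMass_cons {n : ℕ} (p : Fin (n + 1) → A → ℝ) (F : (Fin (n + 1) → A) → ℝ) :
    mean (prodMass p) F =
      mean (p 0) (fun a => mean (prodMass fun i => p i.succ) (fun x => F (Fin.cons a x))) := by
  simp only [mean, prodMass, mul_sum, ← mul_assoc]
  rw [← (Fin.consEquiv fun _ : Fin (n + 1) => A).sum_comp, Fintype.sum_prod_type]
  simp only [Fin.consEquiv_apply, Fin.prod_univ_succ, Fin.cons_zero, Fin.cons_succ]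
  rfl

end ProdMass

section McDiarmid

variable [Fintype A]

-- Symmetrization: with `b` an independent copy of `a`, Jensen replaces `exp (-s * 𝔼 X)` by
-- `𝔼 exp (-s * X b)`, and the mean of `exp (s * (X a - X b))` is that of its even part `cosh`.
lemma mean_exp_le_of_oscillation {p X : A → ℝ} (hp : p ∈ stdSimplex ℝ A) {c : ℝ}
    (hX : ∀ a b, |X a - X b| ≤ c) (s : ℝ) :
    mean p (fun a => exp (s * X a)) ≤ exp (s * mean p X + (s * c) ^ 2 / 2) := by
  set Δ : ℝ := mean p fun a => mean p fun b => exp (s * (X a - X b)) with hΔ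
  have hjensen : mean p (fun a => exp (s * X a)) * exp (-s * mean p X) ≤ Δ := by
    have hneg : exp (-s * mean p X) ≤ mean p fun b => exp (-s * X b) := by
      rw [← mean_const_mul]
      exact map_mean_le_of_convexOn hp convexOn_exp _
    have hfactor : mean p (fun a => exp (s * X a)) * mean p (fun b => exp (-s * X b)) = Δ := by
      rw [hΔ, mul_comm, ← mean_const_mul]
      congr 1
      funext a
      rw [mul_comm, ← mean_const_mul]
      congr 1
      funext b
      rw [← exp_add]
      ring_nf
    rw [← hfactor]
    exact mul_le_mul_of_nonneg_left hneg (mean_nonneg hp.1 fun a => (exp_pos _).le)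
  have hcosh : Δ = mean p fun a => mean p fun b => cosh (s * (X a - X b)) := by
    have hswap : Δ = mean p fun a => mean p fun b => exp (-(s * (X a - X b))) := by
      rw [hΔ, mean_comm]
      simp only [← mul_neg, neg_sub]
    have havg : ∀ a b, cosh (s * (X a - X b)) =
        2⁻¹ * (exp (s * (X a - X b)) + exp (-(s * (X a - X b)))) := fun a b => by
      rw [cosh_eq]; ring
    simp only [havg, mean_const_mul, mean_add, ← hswap, ← hΔ]
    ring
  have hbound : Δ ≤ exp ((s * c) ^ 2 / 2) := by
    have hpt : ∀ a b, cosh (s * (X a - X b)) ≤ exp ((s * c) ^ 2 / 2) := fun a b => by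
      refine (cosh_le_exp_half_sq _).trans (exp_le_exp.2 ?_)
      rw [mul_pow, mul_pow, ← sq_abs (X a - X b)]
      have := hX a b
      gcongr
    rw [hcosh, ← mean_const hp.2 (exp _)]
    refine mean_mono hp.1 fun a => ?_
    rw [← mean_const hp.2 (exp _)]
    exact mean_mono hp.1 (hpt a)
  rw [exp_add, ← div_le_iff₀' (exp_pos _), div_eq_mul_inv, ← exp_neg, ← neg_mul]
  exact hjensen.trans hbound

lemma mean_exp_le_of_bounded_differences {n : ℕ} {p : Fin n → A → ℝ}
    (hp : ∀ i, p i ∈ stdSimplex ℝ A) {f : (Fin n → A) → ℝ} {c : Fin n → ℝ}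
    (hf : ∀ x i a, |f (Function.update x i a) - f x| ≤ c i) (s : ℝ) :
    mean (prodMass p) (fun x => exp (s * f x)) ≤
      exp (s * mean (prodMass p) f + s ^ 2 * (∑ i, c i ^ 2) / 2) := by
  induction n with
  | zero => simp [mean, prodMass]
  | succ n ih =>
    rw [mean_prodMass_cons, mean_prodMass_cons p f]
    set q : Fin n → A → ℝ := fun i => p i.succ
    have hqmem : prodMass q ∈ stdSimplex ℝ (Fin n → A) :=
      prodMass_mem_stdSimplex fun i => hp i.succ
    set g : A → ℝ := fun a => mean (prodMass q) fun x => f (Fin.cons a x) with hg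
    set v : ℝ := s ^ 2 * (∑ i : Fin n, c i.succ ^ 2) / 2 with hv
    have hinner : ∀ a, mean (prodMass q) (fun x => exp (s * f (Fin.cons a x))) ≤
        exp v * exp (s * g a) := fun a => by
      rw [← exp_add, add_comm v]
      refine ih (fun i => hp i.succ) fun x i b => ?_
      simpa only [Fin.cons_update] using hf (Fin.cons a x) i.succ b
    have hosc : ∀ a b, |g a - g b| ≤ c 0 := fun a b => by
      simp only [hg, ← mean_sub]
      refine abs_mean_le hqmem fun x => ?_
      simpa only [Fin.update_cons_zero] using hf (Fin.cons b x) 0 a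
    calc mean (p 0) (fun a => mean (prodMass q) fun x => exp (s * f (Fin.cons a x)))
        ≤ mean (p 0) (fun a => exp v * exp (s * g a)) := mean_mono (hp 0).1 hinner
      _ = exp v * mean (p 0) (fun a => exp (s * g a)) := mean_const_mul _ _ _
      _ ≤ exp v * exp (s * mean (p 0) g + (s * c 0) ^ 2 / 2) :=
          mul_le_mul_of_nonneg_left (mean_exp_le_of_oscillation (hp 0) hosc s) (exp_pos _).le
      _ = exp (s * mean (p 0) g + s ^ 2 * (∑ i, c i ^ 2) / 2) := by
          rw [← exp_add, Fin.sum_univ_succ, hv]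
          ring_nf

lemma prob_mean_add_le_of_bounded_differences {n : ℕ} {p : Fin n → A → ℝ}
    (hp : ∀ i, p i ∈ stdSimplex ℝ A) {f : (Fin n → A) → ℝ} {c : Fin n → ℝ}
    (hf : ∀ x i a, |f (Function.update x i a) - f x| ≤ c i) {t : ℝ} (ht : 0 ≤ t) :
    prob (prodMass p) (fun x => mean (prodMass p) f + t ≤ f x) ≤
      exp (-(t ^ 2 / (2 * ∑ i, c i ^ 2))) := by
  set S : ℝ := ∑ i, c i ^ 2
  set s : ℝ := t / S with hs
  calc prob (prodMass p) (fun x => mean (prodMass p) f + t ≤ f x)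
      ≤ exp (-(s * (mean (prodMass p) f + t))) * mean (prodMass p) (fun x => exp (s * f x)) :=
        prob_ge_le_exp_mul_mean_exp (prodMass_mem_stdSimplex hp).1 f (by positivity) _
    _ ≤ exp (-(s * (mean (prodMass p) f + t))) *
          exp (s * mean (prodMass p) f + s ^ 2 * S / 2) :=
        mul_le_mul_of_nonneg_left (mean_exp_le_of_bounded_differences hp hf s) (exp_pos _).le
    _ = exp (-(s * t) + s ^ 2 * S / 2) := by rw [← exp_add]; ring_nf
    _ = exp (-(t ^ 2 / (2 * S))) := by
        congr 1
        rcases eq_or_ne S 0 with h0 | h0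
        · simp [hs, h0]
        · rw [hs]; field_simp; ring

end McDiarmid

section TotalVariation

variable [Fintype B]

lemma abs_TV_sub_TV_le (p q r : B → ℝ) : |TV p r - TV q r| ≤ TV p q := by
  rw [TV, TV, TV, ← sub_div, ← sum_sub_distrib, abs_div, abs_two]
  gcongr
  refine (abs_sum_le_sum_abs _ _).trans (sum_le_sum fun b _ => ?_)
  simpa only [sub_sub_sub_cancel_right] using abs_abs_sub_abs_le (p b - r b) (q b - r b)

lemma TV_le_one {p q : B → ℝ} (hp : p ∈ stdSimplex ℝ B) (hq : q ∈ stdSimplex ℝ B) :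
    TV p q ≤ 1 := by
  have hsum : ∑ b, |p b - q b| ≤ ∑ b, (p b + q b) := sum_le_sum fun b _ =>
    abs_le.2 ⟨by linarith [hp.1 b, hq.1 b], by linarith [hp.1 b, hq.1 b]⟩
  rw [sum_add_distrib, hp.2, hq.2] at hsum
  rw [TV]
  linarith

end TotalVariation

/-- Mass function of `n` independent samples from `p`. -/
abbrev iid (n : ℕ) (p : A → ℝ) : (Fin n → A) → ℝ := prodMass fun _ => p

section Codebook

/-- Average of `X` over the codewords of the codebook `d`. -/
def codeMean {M : ℕ} (d : Fin M → A) (X : A → ℝ) : ℝ := 1 / (M : ℝ) * ∑ l, X (d l)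

/-- Output mass function of the channel `W` when its input is a uniformly chosen codeword
of the codebook `d`. -/
def codeOutput {M : ℕ} (d : Fin M → A) (W : A → B → ℝ) (b : B) : ℝ := codeMean d fun a => W a b

/-- Output mass function of the channel `W` when its input has mass function `p`. -/
def output [Fintype A] (p : A → ℝ) (W : A → B → ℝ) (b : B) : ℝ := mean p fun a => W a b

/-- Joint mass function of input and output of the channel `W` with input mass function `p`. -/
def joint (p : A → ℝ) (W : A → B → ℝ) (z : A × B) : ℝ := p z.1 * W z.1 z.2

variable [Fintype A] [Fintype B] {p : A → ℝ} {W : A → B → ℝ} {M : ℕ}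

lemma joint_mem_stdSimplex (hp : p ∈ stdSimplex ℝ A) (hW : ∀ a, W a ∈ stdSimplex ℝ B) :
    joint p W ∈ stdSimplex ℝ (A × B) := by
  refine ⟨fun z => mul_nonneg (hp.1 _) ((hW _).1 _), ?_⟩
  simp only [joint, Fintype.sum_prod_type, ← mul_sum, (hW _).2, mul_one, hp.2]

lemma output_mem_stdSimplex (hp : p ∈ stdSimplex ℝ A) (hW : ∀ a, W a ∈ stdSimplex ℝ B) :
    output p W ∈ stdSimplex ℝ B := by
  refine ⟨fun b => mean_nonneg hp.1 fun a => (hW a).1 b, ?_⟩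
  simp only [output, ← mean_sum, (hW _).2, mean_const hp.2]

lemma mean_codeMean (hp : ∑ a, p a = 1) (hM : M ≠ 0) (X : A → ℝ) :
    mean (iid M p) (fun d => codeMean d X) = mean p X := by
  simp only [codeMean, mean_const_mul, mean_sum]
  simp only [mean_prodMass_apply (p := fun _ : Fin M => p) (fun _ => hp), sum_const, card_univ,
    Fintype.card_fin, nsmul_eq_mul]
  field_simp

lemma mean_sq_sum_of_mean_eq_zero {n : ℕ} {q h : Fin n → A → ℝ}
    (hq : ∀ i, q i ∈ stdSimplex ℝ A) (hh : ∀ i, mean (q i) (h i) = 0) :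
    mean (prodMass q) (fun x => (∑ i, h i (x i)) ^ 2) = ∑ i, mean (q i) (fun a => h i a ^ 2) := by
  induction n with
  | zero => simp [mean]
  | succ n ih =>
    have htail : ∑ x, prodMass (fun i : Fin n => q i.succ) x = 1 :=
      (prodMass_mem_stdSimplex fun i : Fin n => hq i.succ).2
    have hcross : mean (prodMass fun i : Fin n => q i.succ)
        (fun x => ∑ i, h i.succ (x i)) = 0 := by
      rw [mean_sum]
      exact sum_eq_zero fun (i : Fin n) _ => by
        rw [mean_prodMass_apply (p := fun i : Fin n => q i.succ) (fun j => (hq j.succ).2), hh]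
    have htailSq := ih (q := fun i => q i.succ) (h := fun i => h i.succ) (fun i => hq i.succ)
      fun i => hh i.succ
    rw [mean_prodMass_cons, Fin.sum_univ_succ]
    simp only [Fin.sum_univ_succ, Fin.cons_zero, Fin.cons_succ, add_sq, mean_add, mean_const_mul,
      mean_const htail, hcross, mul_zero, add_zero, htailSq, mean_const (hq 0).2]

lemma mean_sq_sub_mean_le (hp : ∑ a, p a = 1) (X : A → ℝ) :
    mean p (fun a => (X a - mean p X) ^ 2) ≤ mean p (fun a => X a ^ 2) := by
  have hexpand : ∀ a, (X a - mean p X) ^ 2 = X a ^ 2 - 2 * mean p X * X a + mean p X ^ 2 :=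
    fun a => by ring
  simp only [hexpand, mean_add, mean_sub, mean_const_mul, mean_const hp]
  linarith [sq_nonneg (mean p X)]

lemma mean_abs_codeMean_sub_le_sqrt (hp : p ∈ stdSimplex ℝ A) (hM : M ≠ 0) (X : A → ℝ) :
    mean (iid M p) (fun d => |codeMean d X - mean p X|) ≤ √(mean p (fun a => X a ^ 2) / M) := by
  have hcenter : ∀ d : Fin M → A,
      codeMean d X - mean p X = 1 / (M : ℝ) * ∑ l, (X (d l) - mean p X) := fun d => by
    rw [codeMean, sum_sub_distrib, sum_const, card_univ, Fintype.card_fin, nsmul_eq_mul]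
    field_simp
  have hvar : mean (iid M p) (fun d => (∑ l, (X (d l) - mean p X)) ^ 2) =
      M * mean p (fun a => (X a - mean p X) ^ 2) := by
    rw [mean_sq_sum_of_mean_eq_zero (h := fun _ a => X a - mean p X) (fun _ => hp) fun _ => by
      rw [mean_sub, mean_const hp.2, sub_self]]
    simp only [sum_const, card_univ, Fintype.card_fin, nsmul_eq_mul]
  refine (mean_abs_le_sqrt_mean_sq (prodMass_mem_stdSimplex fun _ => hp) _).trans ?_
  refine Real.sqrt_le_sqrt ?_
  simp only [hcenter, mul_pow, mean_const_mul, hvar]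
  calc (1 / (M : ℝ)) ^ 2 * (M * mean p fun a => (X a - mean p X) ^ 2)
      = (mean p fun a => (X a - mean p X) ^ 2) / M := by field_simp
    _ ≤ (mean p fun a => X a ^ 2) / M := by
        gcongr
        exact mean_sq_sub_mean_le hp.2 X

lemma mean_abs_codeMean_sub_le_two_mul (hp : p ∈ stdSimplex ℝ A) (hM : M ≠ 0) {X : A → ℝ}
    (hX : ∀ a, 0 ≤ X a) :
    mean (iid M p) (fun d => |codeMean d X - mean p X|) ≤ 2 * mean p X := by
  have hiid : iid M p ∈ stdSimplex ℝ (Fin M → A) := prodMass_mem_stdSimplex fun _ => hp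
  have htri : ∀ d : Fin M → A, |codeMean d X - mean p X| ≤ codeMean d X + mean p X := fun d => by
    have hcode : 0 ≤ codeMean d X := mul_nonneg (by positivity) (sum_nonneg fun l _ => hX _)
    have hmean : 0 ≤ mean p X := mean_nonneg hp.1 hX
    exact abs_le.2 ⟨by linarith, by linarith⟩
  refine (mean_mono hiid.1 htri).trans_eq ?_
  rw [mean_add, mean_codeMean hp.2 hM, mean_const hiid.2, two_mul]

lemma mean_abs_codeMean_sub_le_of_truncation (hp : p ∈ stdSimplex ℝ A) (hM : M ≠ 0) {X : A → ℝ}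
    (hX : ∀ a, 0 ≤ X a) {θ : ℝ} (hθ : 0 ≤ θ) :
    mean (iid M p) (fun d => |codeMean d X - mean p X|) ≤
      √(θ * mean p X / M) + 2 * mean p (fun a => if θ < X a then X a else 0) := by
  set H : A → ℝ := fun a => if θ < X a then X a else 0 with hH
  set L : A → ℝ := fun a => X a - H a with hL
  have hH0 : ∀ a, 0 ≤ H a := fun a => ite_nonneg (hX a) le_rfl
  have hL2 : ∀ a, L a ^ 2 ≤ θ * X a := fun a => by
    simp only [hL, hH]
    split_ifs with h
    · simpa only [sub_self, ne_eq, OfNat.ofNat_ne_zero, not_false_eq_true, zero_pow] using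
        mul_nonneg hθ (hX a)
    · rw [sub_zero, sq]
      exact mul_le_mul_of_nonneg_right (not_lt.1 h) (hX a)
  have hsplit : ∀ d : Fin M → A, |codeMean d X - mean p X| ≤
      |codeMean d L - mean p L| + |codeMean d H - mean p H| := fun d => by
    have hcode : codeMean d L = codeMean d X - codeMean d H := by
      simp only [codeMean, hL, sum_sub_distrib, mul_sub]
    have hmean : mean p L = mean p X - mean p H := mean_sub p X H
    have hsum : codeMean d X - mean p X =
        (codeMean d L - mean p L) + (codeMean d H - mean p H) := by rw [hcode, hmean]; ring
    exact hsum ▸ abs_add_le _ _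
  calc mean (iid M p) (fun d => |codeMean d X - mean p X|)
      ≤ mean (iid M p) (fun d => |codeMean d L - mean p L|) +
          mean (iid M p) (fun d => |codeMean d H - mean p H|) := by
        rw [← mean_add]
        exact mean_mono (prodMass_mem_stdSimplex fun _ => hp).1 hsplit
    _ ≤ √(mean p (fun a => L a ^ 2) / M) + 2 * mean p H :=
        add_le_add (mean_abs_codeMean_sub_le_sqrt hp hM L)
          (mean_abs_codeMean_sub_le_two_mul hp hM hH0)
    _ ≤ √(θ * mean p X / M) + 2 * mean p H := by
        gcongr
        rw [← mean_const_mul]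
        exact mean_mono hp.1 hL2

lemma prob_joint (p : A → ℝ) (W : A → B → ℝ) (E : A → B → Prop) :
    prob (joint p W) (fun z => E z.1 z.2) =
      ∑ b, mean p (fun a => if E a b then W a b else 0) := by
  simp only [prob, joint, mean, mul_ite, mul_zero, Fintype.sum_prod_type]
  exact sum_comm

lemma mean_TV_codeOutput_le (hp : p ∈ stdSimplex ℝ A) (hW : ∀ a, W a ∈ stdSimplex ℝ B)
    (hM : M ≠ 0) {T : ℝ} (hT : 0 ≤ T) :
    mean (iid M p) (fun d => TV (codeOutput d W) (output p W)) ≤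
      √(T / M) / 2 + prob (joint p W) (fun z => T * output p W z.2 < W z.1 z.2) := by
  have houtput := output_mem_stdSimplex hp hW
  have hletter : ∀ b, mean (iid M p) (fun d => |codeOutput d W b - output p W b|) ≤
      √(T / M) * output p W b +
        2 * mean p (fun a => if T * output p W b < W a b then W a b else 0) := fun b => by
    refine (mean_abs_codeMean_sub_le_of_truncation hp hM (fun a => (hW a).1 b)
      (mul_nonneg hT (houtput.1 b))).trans_eq ?_
    congr 1
    rw [← output, mul_assoc, ← sq, mul_div_right_comm, Real.sqrt_mul' _ (sq_nonneg _),
      Real.sqrt_sq (houtput.1 b)]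
  have hTV : mean (iid M p) (fun d => TV (codeOutput d W) (output p W)) =
      2⁻¹ * ∑ b, mean (iid M p) (fun d => |codeOutput d W b - output p W b|) := by
    simp only [TV, div_eq_inv_mul, mean_const_mul, mean_sum]
  calc mean (iid M p) (fun d => TV (codeOutput d W) (output p W))
      ≤ 2⁻¹ * ∑ b, (√(T / M) * output p W b +
          2 * mean p (fun a => if T * output p W b < W a b then W a b else 0)) := by
        rw [hTV]
        gcongr with b
        exact hletter b
    _ = √(T / M) / 2 + prob (joint p W) (fun z => T * output p W z.2 < W z.1 z.2) := by
        rw [prob_joint p W fun a b => T * output p W b < W a b, sum_add_distrib, ← mul_sum,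
          ← mul_sum, houtput.2]
        ring

end Codebook

section Concentration

variable [Fintype B] {W : A → B → ℝ} {M : ℕ}

lemma TV_codeOutput_update_le (hW : ∀ a, W a ∈ stdSimplex ℝ B) (d : Fin M → A) (i : Fin M)
    (a : A) : TV (codeOutput (Function.update d i a) W) (codeOutput d W) ≤ 1 / M := by
  have hdiff : ∀ b, codeOutput (Function.update d i a) W b - codeOutput d W b =
      1 / (M : ℝ) * (W a b - W (d i) b) := fun b => by
    rw [codeOutput, codeOutput, codeMean, codeMean, ← mul_sub, ← sum_sub_distrib,
      sum_eq_single i (fun l _ hl => by rw [Function.update_of_ne hl, sub_self])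
        (fun hi => absurd (mem_univ i) hi), Function.update_self]
  have hscale : TV (codeOutput (Function.update d i a) W) (codeOutput d W) =
      1 / (M : ℝ) * TV (W a) (W (d i)) := by
    simp only [TV, hdiff, abs_mul, ← mul_sum, abs_of_nonneg (by positivity : 0 ≤ 1 / (M : ℝ))]
    ring
  rw [hscale]
  exact mul_le_of_le_one_right (by positivity) (TV_le_one (hW a) (hW (d i)))

lemma prob_TV_codeOutput_ge_le [Fintype A] {p : A → ℝ} (hp : p ∈ stdSimplex ℝ A)
    (hW : ∀ a, W a ∈ stdSimplex ℝ B) (hM : M ≠ 0) {T t : ℝ} (hT : 0 ≤ T) (ht : 0 ≤ t) :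
    prob (iid M p) (fun d =>
        √(T / M) / 2 + prob (joint p W) (fun z => T * output p W z.2 < W z.1 z.2) + t ≤
          TV (codeOutput d W) (output p W)) ≤
      exp (-(M * t ^ 2 / 2)) := by
  have hiid : iid M p ∈ stdSimplex ℝ (Fin M → A) := prodMass_mem_stdSimplex fun _ => hp
  have hlipschitz : ∀ (d : Fin M → A) i a,
      |TV (codeOutput (Function.update d i a) W) (output p W) -
        TV (codeOutput d W) (output p W)| ≤ 1 / (M : ℝ) := fun d i a =>
    (abs_TV_sub_TV_le _ _ _).trans (TV_codeOutput_update_le hW d i a)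
  refine (prob_mono hiid.1 fun d _ hd => ?_).trans <|
    (prob_mean_add_le_of_bounded_differences
      (f := fun d => TV (codeOutput d W) (output p W)) (c := fun _ => 1 / (M : ℝ))
      (fun _ => hp) hlipschitz ht).trans_eq ?_
  · exact (add_le_add_left (mean_TV_codeOutput_le hp hW hM hT) t).trans hd
  · simp only [sum_const, card_univ, Fintype.card_fin, nsmul_eq_mul]
    congr 1
    field_simp

end Concentration

section Information

lemma mean_pushf [Fintype A] [Fintype B] (p : A → ℝ) (f : A → B) (X : B → ℝ) :
    mean (pushf p f) X = mean p (fun a => X (f a)) := by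
  simp only [mean, pushf, sum_mul]
  rw [sum_comm]
  simp only [ite_mul, zero_mul, sum_ite_eq, mem_univ, if_true]

lemma entRV_eq_neg_mean [Fintype A] [Fintype B] (p : A → ℝ) (f : A → B) :
    entRV p f = -mean p (fun a => logb 2 (pushf p f (f a))) := by
  rw [entRV, ent, ← mean_pushf p f fun b => logb 2 (pushf p f b)]
  rfl

/-- Information density `log (W(b|a) / P_B(b))` of the channel `W` with input mass function `p`,
in nats. -/
def infoDensity [Fintype A] (p : A → ℝ) (W : A → B → ℝ) (z : A × B) : ℝ :=
  log (W z.1 z.2 / output p W z.2)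

/-- Mutual information, in nats, between input and output of the channel `W` with input mass
function `p`. -/
def mutualInfo [Fintype A] [Fintype B] (p : A → ℝ) (W : A → B → ℝ) : ℝ :=
  mean (joint p W) (infoDensity p W)

variable [Fintype A] {p : A → ℝ} {W : A → B → ℝ}

lemma pos_of_joint_pos (hp : ∀ a, 0 ≤ p a) (hW : ∀ a b, 0 ≤ W a b) {z : A × B}
    (hz : 0 < joint p W z) : 0 < p z.1 ∧ 0 < W z.1 z.2 ∧ 0 < output p W z.2 := by
  refine ⟨pos_of_mul_pos_left hz (hW _ _), pos_of_mul_pos_right hz (hp _), hz.trans_le ?_⟩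
  exact single_le_sum (f := fun a => p a * W a z.2) (fun a _ => mul_nonneg (hp a) (hW a _))
    (mem_univ z.1)

variable [Fintype B]

lemma pushf_joint_fst (hW : ∀ a, ∑ b, W a b = 1) : pushf (joint p W) Prod.fst = p := by
  funext a
  simp only [pushf, joint, Fintype.sum_prod_type, sum_ite_irrel, ← mul_sum, hW, mul_one,
    sum_const_zero, sum_ite_eq', mem_univ, if_true]

lemma pushf_joint_snd (p : A → ℝ) (W : A → B → ℝ) :
    pushf (joint p W) Prod.snd = output p W := by
  funext b
  simp only [pushf, joint, output, mean, Fintype.sum_prod_type, sum_ite_eq', mem_univ, if_true]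

lemma pushf_id (q : A → ℝ) : pushf q (fun a => a) = q := by
  funext a
  simp only [pushf, sum_ite_eq', mem_univ, if_true]

lemma mi_joint (hp : ∀ a, 0 ≤ p a) (hW : ∀ a, W a ∈ stdSimplex ℝ B) :
    mi (joint p W) Prod.fst Prod.snd = mutualInfo p W / log 2 := by
  have hterm : ∀ z, joint p W z * (infoDensity p W z / log 2) =
      joint p W z * (logb 2 (joint p W z) - logb 2 (p z.1) - logb 2 (output p W z.2)) := fun z => by
    rcases (mul_nonneg (hp z.1) ((hW z.1).1 z.2)).eq_or_lt with h0 | hpos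
    · rw [show joint p W z = 0 from h0.symm, zero_mul, zero_mul]
    · obtain ⟨hpa, hWab, hout⟩ := pos_of_joint_pos hp (fun a => (hW a).1) hpos
      rw [infoDensity, log_div hWab.ne' hout.ne']
      simp only [logb, joint, log_mul hpa.ne' hWab.ne']
      ring
  calc mi (joint p W) Prod.fst Prod.snd
      = mean (joint p W) (fun z =>
          logb 2 (joint p W z) - logb 2 (p z.1) - logb 2 (output p W z.2)) := by
        simp only [mi, Prod.mk.eta, entRV_eq_neg_mean, pushf_joint_fst fun a => (hW a).2,
          pushf_joint_snd, pushf_id, mean_sub]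
        ring
    _ = mean (joint p W) (fun z => infoDensity p W z / log 2) :=
        sum_congr rfl fun z _ => (hterm z).symm
    _ = mutualInfo p W / log 2 := by
        simp only [div_eq_inv_mul, mean_const_mul, mutualInfo]

lemma mutualInfo_nonneg (hp : p ∈ stdSimplex ℝ A) (hW : ∀ a, W a ∈ stdSimplex ℝ B) :
    0 ≤ mutualInfo p W := by
  have hout := output_mem_stdSimplex hp hW
  have hindep := joint_mem_stdSimplex hp fun _ : A => hout
  have hterm : ∀ z, joint p W z - joint p (fun _ => output p W) z ≤
      joint p W z * infoDensity p W z := fun z => by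
    rcases ((joint_mem_stdSimplex hp hW).1 z).eq_or_lt with h0 | hpos
    · rw [← h0, zero_mul, zero_sub]
      exact neg_nonpos.2 (hindep.1 z)
    · obtain ⟨-, hWab, hob⟩ := pos_of_joint_pos hp.1 (fun a => (hW a).1) hpos
      calc joint p W z - joint p (fun _ => output p W) z
          = joint p W z * (1 - (W z.1 z.2 / output p W z.2)⁻¹) := by
            simp only [joint]
            field_simp
        _ ≤ joint p W z * infoDensity p W z :=
            mul_le_mul_of_nonneg_left (one_sub_inv_le_log_of_pos (div_pos hWab hob)) hpos.le
  refine le_trans (le_of_eq ?_) (sum_le_sum fun z _ => hterm z)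
  rw [sum_sub_distrib, (joint_mem_stdSimplex hp hW).2, hindep.2, sub_self]

end Information

section Chernoff

variable [Fintype A] {q X : A → ℝ} {r : ℝ}

lemma exists_mean_exp_lt (hq : ∑ a, q a = 1) (h : mean q X < r) :
    ∃ s > 0, mean q (fun a => exp (s * X a)) < exp (s * r) := by
  set φ : ℝ → ℝ := fun s => mean q (fun a => exp (s * X a)) - exp (s * r) with hφ
  have hexp : ∀ c : ℝ, HasDerivAt (fun s => exp (s * c)) c 0 := fun c => by
    simpa using ((hasDerivAt_id (0 : ℝ)).mul_const c).exp
  have hderiv : HasDerivAt φ (mean q X - r) 0 :=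
    (HasDerivAt.fun_sum fun a _ => (hexp (X a)).const_mul (q a)).sub (hexp r)
  have hzero : φ 0 = 0 := by simp only [hφ, zero_mul, exp_zero, mean_const hq, sub_self]
  have hslope : ∀ᶠ s in nhdsWithin (0 : ℝ) (Set.Ioi 0), s⁻¹ • (φ (0 + s) - φ 0) < 0 :=
    hderiv.tendsto_slope_zero_right.eventually_lt_const (sub_neg.2 h)
  obtain ⟨s, hneg, hs⟩ := (hslope.and self_mem_nhdsWithin).exists
  refine ⟨s, hs, ?_⟩
  rw [zero_add, hzero, sub_zero, smul_eq_mul] at hneg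
  exact sub_neg.1 (neg_of_mul_neg_right hneg (inv_nonneg.2 (le_of_lt hs)))

lemma exists_prob_iid_sum_ge_le (hq : q ∈ stdSimplex ℝ A) (h : mean q X < r) :
    ∃ β > 0, ∀ n : ℕ, prob (iid n q) (fun x => n * r ≤ ∑ i, X (x i)) ≤ exp (-(β * n)) := by
  obtain ⟨r', hr', hr'r⟩ := exists_between h
  obtain ⟨s, hs, hexp⟩ := exists_mean_exp_lt hq.2 hr'
  refine ⟨s * (r - r'), mul_pos hs (sub_pos.2 hr'r), fun n => ?_⟩
  calc prob (iid n q) (fun x => n * r ≤ ∑ i, X (x i))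
      ≤ exp (-(s * (n * r))) * mean (iid n q) (fun x => exp (s * ∑ i, X (x i))) :=
        prob_ge_le_exp_mul_mean_exp (prodMass_mem_stdSimplex fun _ => hq).1 _ hs.le _
    _ = exp (-(s * (n * r))) * mean q (fun a => exp (s * X a)) ^ n := by
        simp only [mul_sum, exp_sum]
        rw [mean_prodMass_prod (fun _ => q) fun _ a => exp (s * X a), prod_const, card_univ,
          Fintype.card_fin]
    _ ≤ exp (-(s * (n * r))) * exp (s * r') ^ n := by
        have hmean : 0 ≤ mean q fun a => exp (s * X a) := mean_nonneg hq.1 fun a => (exp_pos _).le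
        gcongr
    _ = exp (-(s * (r - r') * n)) := by
        rw [← exp_nat_mul, ← exp_add]
        ring_nf

end Chernoff

section Memoryless

/-- The `n`-fold memoryless extension of the channel `W`. -/
def memoryless (n : ℕ) (W : A → B → ℝ) (x : Fin n → A) : (Fin n → B) → ℝ :=
  prodMass fun i => W (x i)

variable {n : ℕ}

lemma memoryless_mem_stdSimplex [Fintype B] {W : A → B → ℝ} (hW : ∀ a, W a ∈ stdSimplex ℝ B)
    (x : Fin n → A) : memoryless n W x ∈ stdSimplex ℝ (Fin n → B) :=
  prodMass_mem_stdSimplex fun i => hW (x i)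

variable [Fintype A]

lemma output_iid_memoryless (p : A → ℝ) (W : A → B → ℝ) :
    output (iid n p) (memoryless n W) = prodMass fun _ => output p W := by
  funext y
  exact mean_prodMass_prod (fun _ => p) fun i a => W a (y i)

variable [Fintype B] {p : A → ℝ} {W : A → B → ℝ} {r : ℝ}

lemma prob_joint_iid_memoryless (p : A → ℝ) (W : A → B → ℝ)
    (E : (Fin n → A) × (Fin n → B) → Prop) :
    prob (joint (iid n p) (memoryless n W)) E =
      prob (iid n (joint p W)) (fun z => E (fun i => (z i).1, fun i => (z i).2)) := by
  rw [← prob_comp_equiv (Equiv.arrowProdEquivProdArrow (Fin n) (fun _ => A) fun _ => B)]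
  congr 1
  funext z
  exact prod_mul_distrib.symm

lemma exists_prob_exp_mul_output_lt_memoryless_le (hp : p ∈ stdSimplex ℝ A)
    (hW : ∀ a, W a ∈ stdSimplex ℝ B) (h : mutualInfo p W < r) :
    ∃ β > 0, ∀ n : ℕ, prob (joint (iid n p) (memoryless n W)) (fun z =>
        exp (n * r) * output (iid n p) (memoryless n W) z.2 < memoryless n W z.1 z.2) ≤
      exp (-(β * n)) := by
  have hjoint := joint_mem_stdSimplex hp hW
  obtain ⟨β, hβ, hchernoff⟩ := exists_prob_iid_sum_ge_le hjoint h
  refine ⟨β, hβ, fun n => le_trans ?_ (hchernoff n)⟩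
  rw [prob_joint_iid_memoryless]
  refine prob_mono (prodMass_mem_stdSimplex fun _ => hjoint).1 fun z hz hlt => ?_
  have hpos : ∀ i, 0 < W (z i).1 (z i).2 ∧ 0 < output p W (z i).2 := fun i =>
    (pos_of_joint_pos hp.1 (fun a => (hW a).1) <| (hjoint.1 (z i)).lt_of_ne'
      (prod_ne_zero_iff.1 hz.ne' i (mem_univ i))).2
  have hratio : ∀ i, 0 < W (z i).1 (z i).2 / output p W (z i).2 := fun i =>
    div_pos (hpos i).1 (hpos i).2
  rw [output_iid_memoryless] at hlt
  calc n * r ≤ log (∏ i, W (z i).1 (z i).2 / output p W (z i).2) := by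
        rw [le_log_iff_exp_le (prod_pos fun i _ => hratio i), prod_div_distrib,
          le_div_iff₀ (prod_pos fun i _ => (hpos i).2)]
        exact hlt.le
    _ = ∑ i, infoDensity p W (z i) := log_prod fun i _ => (hratio i).ne'

end Memoryless

section Covering

variable [Fintype A] [Fintype B] {p : A → ℝ} {W : A → B → ℝ}

lemma prob_TV_codeOutput_gt_le_exp_neg {M : ℕ} {T u : ℝ} (hp : p ∈ stdSimplex ℝ A)
    (hW : ∀ a, W a ∈ stdSimplex ℝ B) (hT : 1 ≤ T) (hu : 32 ≤ u) (hM : T * u ^ 4 ≤ M)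
    (htail : prob (joint p W) (fun z => T * output p W z.2 < W z.1 z.2) ≤ (u ^ 2)⁻¹) :
    prob (iid M p) (fun d => 1 / √2 * u⁻¹ < TV (codeOutput d W) (output p W)) ≤ exp (-u) := by
  have hu0 : 0 < u := by linarith
  have hM0 : 0 < (M : ℝ) := (by positivity : 0 < T * u ^ 4).trans_le hM
  have hvariance : √(T / M) ≤ (u ^ 2)⁻¹ := by
    refine sqrt_le_iff.2 ⟨by positivity, (div_le_iff₀ hM0).2 ?_⟩
    rw [← inv_pow, ← pow_mul, inv_pow, ← div_eq_inv_mul, le_div_iff₀ (by positivity)]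
    exact hM
  have hmean : (u ^ 2)⁻¹ ≤ u⁻¹ / 32 := by
    rw [sq, mul_inv, div_eq_mul_inv]
    gcongr
  have hsqrt : (1 : ℝ) / 2 ≤ 1 / √2 := by
    gcongr
    exact sqrt_le_iff.2 (by norm_num)
  have hthreshold : u⁻¹ / 2 ≤ 1 / √2 * u⁻¹ := by
    rw [div_eq_mul_one_div, mul_comm]
    exact mul_le_mul_of_nonneg_right hsqrt (inv_pos.2 hu0).le
  have hexponent : u ≤ M * (u⁻¹ / 4) ^ 2 / 2 := by
    calc u ≤ u ^ 2 / 32 := by nlinarith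
      _ = 1 * u ^ 4 * (u⁻¹ / 4) ^ 2 / 2 := by field_simp; norm_num
      _ ≤ M * (u⁻¹ / 4) ^ 2 / 2 := by
        gcongr
        exact (by gcongr : 1 * u ^ 4 ≤ T * u ^ 4).trans hM
  calc prob (iid M p) (fun d => 1 / √2 * u⁻¹ < TV (codeOutput d W) (output p W))
      ≤ prob (iid M p) (fun d =>
          √(T / M) / 2 + prob (joint p W) (fun z => T * output p W z.2 < W z.1 z.2) + u⁻¹ / 4 ≤
            TV (codeOutput d W) (output p W)) :=
        prob_mono (prodMass_mem_stdSimplex fun _ => hp).1 fun d _ hd => by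
          linarith [inv_pos.2 hu0]
    _ ≤ exp (-(M * (u⁻¹ / 4) ^ 2 / 2)) :=
        prob_TV_codeOutput_ge_le hp hW (by exact_mod_cast hM0.ne') (by linarith) (by positivity)
    _ ≤ exp (-u) := exp_le_exp.2 (neg_le_neg hexponent)

lemma exists_prob_TV_codeOutput_gt_le {ρ : ℝ} (hp : p ∈ stdSimplex ℝ A)
    (hW : ∀ a, W a ∈ stdSimplex ℝ B) (h : mutualInfo p W < ρ) :
    ∃ γ > 0, ∀ᶠ n : ℕ in atTop, ∀ M : ℕ, exp (n * ρ) ≤ M →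
      prob (iid M (iid n p)) (fun d => 1 / √2 * exp (-γ * n) <
          TV (codeOutput d (memoryless n W)) (output (iid n p) (memoryless n W))) ≤
        exp (-exp (γ * n)) := by
  obtain ⟨r, hIr, hrρ⟩ := exists_between h
  have hr : 0 < r := (mutualInfo_nonneg hp hW).trans_lt hIr
  obtain ⟨β, hβ, htail⟩ := exists_prob_exp_mul_output_lt_memoryless_le hp hW hIr
  obtain ⟨γ, hγ, hγmin⟩ := exists_between (show 0 < min (β / 2) ((ρ - r) / 4) from
    lt_min (half_pos hβ) (by linarith))
  obtain ⟨hγβ, hγρ⟩ := lt_min_iff.1 hγmin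
  have hgrowth : ∀ᶠ n : ℕ in atTop, 32 ≤ exp (γ * n) :=
    (tendsto_exp_atTop.comp (tendsto_natCast_atTop_atTop.const_mul_atTop hγ)).eventually_ge_atTop 32
  refine ⟨γ, hγ, hgrowth.mono fun n hn M hM => ?_⟩
  have hpow : ∀ k : ℕ, exp (γ * n) ^ k = exp (k * (γ * n)) := fun k => (exp_nat_mul _ k).symm
  rw [neg_mul, exp_neg (γ * n)]
  refine prob_TV_codeOutput_gt_le_exp_neg (T := exp (n * r)) (prodMass_mem_stdSimplex fun _ => hp)
    (memoryless_mem_stdSimplex hW) (one_le_exp (by positivity)) hn ?_ ((htail n).trans ?_)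
  · refine le_trans ?_ hM
    rw [hpow, ← exp_add, exp_le_exp]
    push_cast
    linarith [mul_le_mul_of_nonneg_left hγρ.le n.cast_nonneg]
  · rw [hpow, ← exp_neg, exp_le_exp]
    push_cast
    linarith [mul_le_mul_of_nonneg_left hγβ.le n.cast_nonneg]

lemma exists_prob_exists_TV_codeOutput_gt_le {ρ : ℝ} (hp : p ∈ stdSimplex ℝ A)
    (hW : ∀ a, W a ∈ stdSimplex ℝ B) (h : mutualInfo p W < ρ) :
    ∃ γ > 0, ∀ᶠ n : ℕ in atTop, ∀ K M : ℕ, exp (n * ρ) ≤ M →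
      prob (prodMass fun _ : Fin K × Fin M => iid n p) (fun c => ∃ m, 1 / √2 * exp (-γ * n) <
          TV (codeOutput (fun l => c (m, l)) (memoryless n W))
            (output (iid n p) (memoryless n W))) ≤
        K * exp (-exp (γ * n)) := by
  obtain ⟨γ, hγ, hsingle⟩ := exists_prob_TV_codeOutput_gt_le hp hW h
  refine ⟨γ, hγ, hsingle.mono fun n hn K M hM => ?_⟩
  refine (prob_prodMass_exists_row_le (prodMass_mem_stdSimplex fun _ => hp) fun d =>
    1 / √2 * exp (-γ * n) <
      TV (codeOutput d (memoryless n W)) (output (iid n p) (memoryless n W))).trans ?_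
  rw [Fintype.card_fin]
  exact mul_le_mul_of_nonneg_left (hn M hM) K.cast_nonneg

end Covering

section Asymptotics

lemma tendsto_natCeil_two_rpow_mul_exp_neg_exp (R : ℝ) {γ : ℝ} (hγ : 0 < γ) :
    Tendsto (fun n : ℕ => (⌈(2 : ℝ) ^ ((n : ℝ) * R)⌉₊ : ℝ) * exp (-exp (γ * n)))
      atTop (nhds 0) := by
  have hu : Tendsto (fun n : ℕ => exp (γ * n)) atTop atTop :=
    tendsto_exp_atTop.comp (tendsto_natCast_atTop_atTop.const_mul_atTop hγ)
  have hdecay : ∀ s : ℝ, Tendsto (fun n : ℕ => exp (γ * n) ^ s * exp (-exp (γ * n)))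
      atTop (nhds 0) := fun s => by
    simpa only [neg_one_mul, Function.comp_def] using
      (tendsto_rpow_mul_exp_neg_mul_atTop_nhds_zero s 1 one_pos).comp hu
  have hpow : ∀ n : ℕ, (2 : ℝ) ^ ((n : ℝ) * R) = exp (γ * n) ^ (R * log 2 / γ) := fun n => by
    rw [rpow_def_of_pos two_pos, ← exp_mul]
    congr 1
    field_simp
  refine squeeze_zero (fun n => by positivity) (fun n => ?_)
    (by simpa only [add_zero] using (hdecay (R * log 2 / γ)).add (hdecay 0))
  rw [rpow_zero, ← add_mul, ← hpow]
  gcongr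
  exact (Nat.ceil_lt_add_one (by positivity)).le

end Asymptotics

end SoftCovering

/-- **Uniform-over-messages soft covering via union bound** (semantic secrecy step of the
achievability proof).  Draw a codebook `{Uⁿ(m,ℓ)}` with `m ∈ [1:⌈2^{nR}⌉]`,
`ℓ ∈ [1:⌈2^{nR'}⌉]`, i.i.d. from `P_U^{⊗n}`, and for each `m` let `Q̂ᵐ_{Yⁿ}` be the
output pmf induced by the sub-codebook of message `m`.  If `R' > I(U;Y)`, then there
exist `γ₁, γ₂ > 0` such that for all sufficiently large `n`,
`P(maxₘ V(Q̂ᵐ_{Yⁿ}, P_Y^{⊗n}) > (1/√2) e^{−γ₁ n}) ≤ ⌈2^{nR}⌉ e^{−e^{γ₂ n}}`;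
in particular this probability tends to `0` as `n → ∞`. -/
theorem uniform_soft_covering_union_bound
    {U Y : Type*} [Fintype U] [Fintype Y]
    (PU : U → ℝ) (W : U → Y → ℝ)
    (hPU0 : ∀ u, 0 ≤ PU u) (hPU1 : ∑ u, PU u = 1)
    (hW0 : ∀ u y, 0 ≤ W u y) (hW1 : ∀ u, ∑ y, W u y = 1)
    (R R' : ℝ)
    (hR' : R' > mi (fun z : U × Y => PU z.1 * W z.1 z.2) Prod.fst Prod.snd) :
    ∃ γ₁ > (0 : ℝ), ∃ γ₂ > (0 : ℝ),
      let prob : ℕ → ℝ := fun n =>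
        ∑ c : Fin (⌈(2 : ℝ) ^ ((n : ℝ) * R)⌉₊) × Fin (⌈(2 : ℝ) ^ ((n : ℝ) * R')⌉₊) →
            Fin n → U,
          if ∃ m : Fin (⌈(2 : ℝ) ^ ((n : ℝ) * R)⌉₊),
              TV (fun yn : Fin n → Y =>
                    (1 / ((⌈(2 : ℝ) ^ ((n : ℝ) * R')⌉₊ : ℕ) : ℝ)) *
                      ∑ l, ∏ t, W (c (m, l) t) (yn t))
                  (fun yn : Fin n → Y => ∏ t, ∑ u, PU u * W u (yn t))
                > (1 / Real.sqrt 2) * Real.exp (-γ₁ * (n : ℝ))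
          then ∏ ml, ∏ t, PU (c ml t) else 0
      (∀ᶠ n : ℕ in atTop,
        prob n ≤ ((⌈(2 : ℝ) ^ ((n : ℝ) * R)⌉₊ : ℕ) : ℝ) * Real.exp (-Real.exp (γ₂ * (n : ℝ)))) ∧
      Tendsto prob atTop (nhds 0) := by
  have hp : PU ∈ stdSimplex ℝ U := ⟨hPU0, hPU1⟩
  have hW : ∀ u, W u ∈ stdSimplex ℝ Y := fun u => ⟨hW0 u, hW1 u⟩
  have hrate : SoftCovering.mutualInfo PU W < R' * log 2 :=
    (div_lt_iff₀ (log_pos one_lt_two)).1 ((SoftCovering.mi_joint hPU0 hW).symm.trans_lt hR')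
  obtain ⟨γ, hγ, hcovering⟩ := SoftCovering.exists_prob_exists_TV_codeOutput_gt_le hp hW hrate
  refine ⟨γ, hγ, γ, hγ, ?_⟩
  intro prob
  have hbound : ∀ᶠ n : ℕ in atTop, prob n ≤
      (⌈(2 : ℝ) ^ ((n : ℝ) * R)⌉₊ : ℝ) * exp (-exp (γ * n)) := by
    filter_upwards [hcovering] with n hn
    have hsize : exp (n * (R' * log 2)) ≤ (⌈(2 : ℝ) ^ ((n : ℝ) * R')⌉₊ : ℝ) := by
      rw [mul_comm R', mul_left_comm, ← rpow_def_of_pos two_pos]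
      exact Nat.le_ceil _
    refine (hn _ _ hsize).trans_eq' (sum_congr rfl fun c _ => ?_)
    rw [SoftCovering.output_iid_memoryless]
    congr
  have hnonneg : ∀ n, 0 ≤ prob n := fun n => sum_nonneg fun c _ =>
    ite_nonneg (prod_nonneg fun ml _ => prod_nonneg fun t _ => hPU0 _) le_rfl
  exact ⟨hbound, squeeze_zero' (.of_forall hnonneg) hbound
    (SoftCovering.tendsto_natCeil_two_rpow_mul_exp_neg_exp R hγ)⟩
end
end

section
/- Key-rate chain inequality (key converse step). Let M, K, S, X be finitely-valued random variables on a common probability space such that K is independent of the pair (M, S). Then H(K) ≥ I(M, K ; X | S) − I(M ; (X, S)). In particular, if K is uniform on a finite set 𝒦, then log₂ |𝒦| ≥ I(M, K ; X | S) − I(M ; (X, S)). -/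
open Finset Filter Real

noncomputable section

open scoped Classical

/-!
The chain rule splits `I(M,K;X|S)` as `I(M;X|S) + I(K;X|M,S)`. The first term is
`I(M;(X,S)) - I(M;S) ≤ I(M;(X,S))`; the second is at most `H(K|M,S) ≤ H(K) ≤ log₂ |𝒦|`. All the
inequalities used are Gibbs' inequality or the fact that a function of a random variable has no
more entropy than the variable itself.
-/

section Pushforward

variable {α β γ : Type*} [Fintype α] (p : α → ℝ)

lemma sum_pushf_mul [Fintype β] (f : α → β) (F : β → ℝ) :
    ∑ b, pushf p f b * F b = ∑ a, p a * F (f a) := by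
  simp only [pushf, Finset.sum_mul, ite_mul, zero_mul]
  rw [Finset.sum_comm]
  simp

lemma sum_pushf [Fintype β] (f : α → β) : ∑ b, pushf p f b = ∑ a, p a := by
  simpa using sum_pushf_mul p f 1

variable {p} (hp : ∀ a, 0 ≤ p a)
include hp

lemma pushf_nonneg (f : α → β) (b : β) : 0 ≤ pushf p f b :=
  Finset.sum_nonneg fun a _ => ite_nonneg (hp a) le_rfl

lemma le_pushf_apply (f : α → β) (a : α) : p a ≤ pushf p f (f a) := by
  simpa [pushf] using Finset.single_le_sum (f := fun x => if f x = f a then p x else 0)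
    (fun x _ => ite_nonneg (hp x) le_rfl) (Finset.mem_univ a)

lemma pushf_le_pushf_comp (f : α → β) (φ : β → γ) (b : β) :
    pushf p f b ≤ pushf p (φ ∘ f) (φ b) := by
  refine Finset.sum_le_sum fun a _ => ?_
  by_cases h : f a = b
  · simp [h]
  · simpa only [h, if_false] using ite_nonneg (hp a) le_rfl

end Pushforward

section Entropy

lemma mul_logb_sub_mul_logb_le {x y : ℝ} (hx : 0 ≤ x) (hy : 0 ≤ y) (hxy : y = 0 → x = 0) :
    x * Real.logb 2 y - x * Real.logb 2 x ≤ (y - x) / Real.log 2 := by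
  rcases hx.eq_or_lt with rfl | hx
  · simpa using div_nonneg hy (Real.log_nonneg one_le_two)
  have hy : 0 < y := hy.lt_of_ne fun h => hx.ne' (hxy h.symm)
  calc x * Real.logb 2 y - x * Real.logb 2 x
      = x * Real.log (y / x) / Real.log 2 := by
        rw [Real.log_div hy.ne' hx.ne', Real.logb, Real.logb]; ring
    _ ≤ x * (y / x - 1) / Real.log 2 := by
        have := Real.log_pos one_lt_two
        gcongr
        exact Real.log_le_sub_one_of_pos (div_pos hy hx)
    _ = (y - x) / Real.log 2 := by rw [mul_sub, mul_div_cancel₀ _ hx.ne', mul_one]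

theorem ent_le_neg_sum_mul_logb {α : Type*} [Fintype α] {p q : α → ℝ} (hp : ∀ a, 0 ≤ p a)
    (hq : ∀ a, 0 ≤ q a) (hpq : ∀ a, q a = 0 → p a = 0) (hsum : ∑ a, q a ≤ ∑ a, p a) :
    ent p ≤ -∑ a, p a * Real.logb 2 (q a) := by
  refine neg_le_neg (sub_nonpos.mp ?_)
  calc ∑ a, p a * Real.logb 2 (q a) - ∑ a, p a * Real.logb 2 (p a)
      ≤ ∑ a, (q a - p a) / Real.log 2 := by
        rw [← Finset.sum_sub_distrib]
        exact Finset.sum_le_sum fun a _ => mul_logb_sub_mul_logb_le (hp a) (hq a) (hpq a)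
    _ = (∑ a, q a - ∑ a, p a) / Real.log 2 := by
        rw [← Finset.sum_div, Finset.sum_sub_distrib]
    _ ≤ 0 := div_nonpos_of_nonpos_of_nonneg (sub_nonpos.mpr hsum) (Real.log_nonneg one_le_two)

lemma ent_le_logb_card {α : Type*} [Fintype α] {p : α → ℝ} (hp : ∀ a, 0 ≤ p a)
    (hp1 : ∑ a, p a = 1) : ent p ≤ Real.logb 2 (Fintype.card α) := by
  have : Nonempty α := by
    by_contra h
    simp [not_nonempty_iff.mp h] at hp1
  have hcard : (Fintype.card α : ℝ) ≠ 0 := Nat.cast_ne_zero.mpr Fintype.card_ne_zero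
  calc ent p ≤ -∑ a, p a * Real.logb 2 (Fintype.card α : ℝ)⁻¹ :=
        ent_le_neg_sum_mul_logb hp (fun _ => by positivity)
          (fun _ h => absurd h (inv_ne_zero hcard)) (by simp [hp1, hcard])
    _ = Real.logb 2 (Fintype.card α) := by
        rw [← Finset.sum_mul, hp1, Real.logb_inv, one_mul, neg_neg]

end Entropy

section RandomVariables

variable {Ω α β γ δ : Type*} [Fintype Ω] [Fintype α] [Fintype β] [Fintype γ] [Fintype δ]
  (p : Ω → ℝ)

lemma entRV_eq_neg_sum (f : Ω → α) :
    entRV p f = -∑ ω, p ω * Real.logb 2 (pushf p f (f ω)) := by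
  rw [entRV, ent, sum_pushf_mul p f fun b => Real.logb 2 (pushf p f b)]

lemma entRV_congr {f : Ω → α} {g : Ω → β} (h : ∀ ω ω', f ω = f ω' ↔ g ω = g ω') :
    entRV p f = entRV p g := by
  simp only [entRV_eq_neg_sum, pushf, h]

lemma mi_prod_right (f : Ω → α) (g : Ω → β) (h : Ω → γ) :
    mi p f (fun ω => (g ω, h ω)) = mi p f h + cmi p f g h := by
  unfold mi cmi
  ring

lemma cmi_prod_left (f : Ω → α) (g : Ω → β) (h : Ω → γ) (k : Ω → δ) :
    cmi p (fun ω => (f ω, g ω)) h k =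
      cmi p f h k + cmi p g h (fun ω => (f ω, k ω)) := by
  have hfgk : entRV p (fun ω => ((f ω, g ω), k ω)) = entRV p (fun ω => (g ω, f ω, k ω)) :=
    entRV_congr p fun _ _ => by simp only [Prod.mk.injEq]; tauto
  have hfhk : entRV p (fun ω => (f ω, h ω, k ω)) = entRV p (fun ω => (h ω, f ω, k ω)) :=
    entRV_congr p fun _ _ => by simp only [Prod.mk.injEq]; tauto
  have hfghk : entRV p (fun ω => ((f ω, g ω), h ω, k ω)) =
      entRV p (fun ω => (g ω, h ω, f ω, k ω)) :=
    entRV_congr p fun _ _ => by simp only [Prod.mk.injEq]; tauto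
  unfold cmi
  rw [hfgk, hfhk, hfghk]
  ring

variable {p} (hp : ∀ ω, 0 ≤ p ω)
include hp

lemma entRV_comp_le (f : Ω → α) (φ : α → β) : entRV p (φ ∘ f) ≤ entRV p f := by
  rw [entRV_eq_neg_sum, entRV_eq_neg_sum]
  refine neg_le_neg (Finset.sum_le_sum fun ω _ => ?_)
  rcases (hp ω).eq_or_lt with hω | hω
  · simp [← hω]
  · exact mul_le_mul_of_nonneg_left (Real.logb_le_logb_of_le one_lt_two
      (hω.trans_le (le_pushf_apply hp f ω)) (pushf_le_pushf_comp hp f φ (f ω))) (hp ω)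

lemma cmi_le_condEnt (f : Ω → α) (g : Ω → β) (h : Ω → γ) : cmi p f g h ≤ condEnt p f h := by
  have hgh : entRV p (fun ω => (g ω, h ω)) ≤ entRV p (fun ω => (f ω, g ω, h ω)) :=
    entRV_comp_le hp (fun ω => (f ω, g ω, h ω)) Prod.snd
  unfold cmi condEnt
  linarith

lemma neg_sum_pushf_prod_mul_logb_mul (f : Ω → α) (g : Ω → β) :
    -∑ x : α × β, pushf p (fun ω => (f ω, g ω)) x *
      Real.logb 2 (pushf p f x.1 * pushf p g x.2) = entRV p f + entRV p g := by
  have hlogb (ω : Ω) : p ω * Real.logb 2 (pushf p f (f ω) * pushf p g (g ω)) =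
      p ω * Real.logb 2 (pushf p f (f ω)) + p ω * Real.logb 2 (pushf p g (g ω)) := by
    rcases (hp ω).eq_or_lt with hω | hω
    · simp [← hω]
    · rw [Real.logb_mul (hω.trans_le (le_pushf_apply hp f ω)).ne'
        (hω.trans_le (le_pushf_apply hp g ω)).ne', mul_add]
  rw [sum_pushf_mul p (fun ω => (f ω, g ω))
      fun x => Real.logb 2 (pushf p f x.1 * pushf p g x.2),
    Finset.sum_congr rfl fun ω _ => hlogb ω, Finset.sum_add_distrib, neg_add,
    ← entRV_eq_neg_sum, ← entRV_eq_neg_sum]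

variable (hp1 : ∑ ω, p ω = 1)
include hp1

lemma mi_nonneg (f : Ω → α) (g : Ω → β) : 0 ≤ mi p f g := by
  have habs (x : α × β) (hx : pushf p f x.1 * pushf p g x.2 = 0) :
      pushf p (fun ω => (f ω, g ω)) x = 0 := by
    refine le_antisymm ?_ (pushf_nonneg hp _ x)
    rcases mul_eq_zero.mp hx with h | h
    · exact (pushf_le_pushf_comp hp (fun ω => (f ω, g ω)) Prod.fst x).trans_eq h
    · exact (pushf_le_pushf_comp hp (fun ω => (f ω, g ω)) Prod.snd x).trans_eq h
  have hsum : ∑ x : α × β, pushf p f x.1 * pushf p g x.2 = 1 := by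
    rw [Fintype.sum_prod_type, ← Fintype.sum_mul_sum, sum_pushf, sum_pushf, hp1, one_mul]
  rw [mi, sub_nonneg, ← neg_sum_pushf_prod_mul_logb_mul hp]
  exact ent_le_neg_sum_mul_logb (pushf_nonneg hp _)
    (fun x => mul_nonneg (pushf_nonneg hp f x.1) (pushf_nonneg hp g x.2)) habs
    (by rw [hsum, sum_pushf, hp1])

lemma condEnt_le_entRV (f : Ω → α) (g : Ω → β) : condEnt p f g ≤ entRV p f := by
  have hmi := mi_nonneg hp hp1 f g
  unfold mi at hmi
  unfold condEnt
  linarith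

lemma entRV_le_logb_card (f : Ω → α) : entRV p f ≤ Real.logb 2 (Fintype.card α) :=
  ent_le_logb_card (pushf_nonneg hp f) ((sum_pushf p f).trans hp1)

theorem cmi_prod_sub_mi_le_condEnt (f : Ω → α) (g : Ω → β) (h : Ω → γ) (k : Ω → δ) :
    cmi p (fun ω => (f ω, g ω)) h k - mi p f (fun ω => (h ω, k ω)) ≤
      condEnt p g (fun ω => (f ω, k ω)) := by
  rw [cmi_prod_left, mi_prod_right]
  linarith [mi_nonneg hp hp1 f k, cmi_le_condEnt hp g h fun ω => (f ω, k ω)]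

end RandomVariables

theorem key_rate_chain_general
    {Ω MT KT ST XT : Type*} [Fintype Ω] [Fintype MT] [Fintype KT] [Fintype ST] [Fintype XT]
    (p : Ω → ℝ) (hp0 : ∀ ω, 0 ≤ p ω) (hp1 : ∑ ω, p ω = 1)
    (fM : Ω → MT) (fK : Ω → KT) (fS : Ω → ST) (fX : Ω → XT) :
    entRV p fK ≥
      cmi p (fun ω => (fM ω, fK ω)) fX fS - mi p fM (fun ω => (fX ω, fS ω)) ∧
    Real.logb 2 (Fintype.card KT : ℝ) ≥
      cmi p (fun ω => (fM ω, fK ω)) fX fS - mi p fM (fun ω => (fX ω, fS ω)) := by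
  have hK := (cmi_prod_sub_mi_le_condEnt hp0 hp1 fM fK fX fS).trans
    (condEnt_le_entRV hp0 hp1 fK _)
  exact ⟨hK, hK.trans (entRV_le_logb_card hp0 hp1 fK)⟩

/-- **Key-rate chain inequality (key converse step).**  Let `M, K, S, X` be
finitely-valued random variables on a common (finite) probability space such that `K`
is independent of the pair `(M, S)`.  Then `H(K) ≥ I(M,K;X|S) − I(M;(X,S))`.
In particular, if `K` is uniform on a finite set `𝒦`, then
`log₂ |𝒦| ≥ I(M,K;X|S) − I(M;(X,S))`. -/
theorem key_rate_chain
    {Ω MT KT ST XT : Type*} [Fintype Ω] [Fintype MT] [Fintype KT] [Fintype ST] [Fintype XT]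
    (p : Ω → ℝ) (hp0 : ∀ ω, 0 ≤ p ω) (hp1 : ∑ ω, p ω = 1)
    (fM : Ω → MT) (fK : Ω → KT) (fS : Ω → ST) (fX : Ω → XT)
    -- K is independent of (M, S)
    (hind : ∀ (k : KT) (ms : MT × ST),
      pushf p (fun ω => (fK ω, fM ω, fS ω)) (k, ms)
        = pushf p fK k * pushf p (fun ω => (fM ω, fS ω)) ms) :
    entRV p fK ≥
      cmi p (fun ω => (fM ω, fK ω)) fX fS - mi p fM (fun ω => (fX ω, fS ω)) ∧
    ((∀ k : KT, pushf p fK k = 1 / (Fintype.card KT : ℝ)) →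
      Real.logb 2 (Fintype.card KT : ℝ) ≥
        cmi p (fun ω => (fM ω, fK ω)) fX fS - mi p fM (fun ω => (fX ω, fS ω))) := by
  obtain ⟨hK, hcard⟩ := key_rate_chain_general p hp0 hp1 fM fK fS fX
  exact ⟨hK, fun _ => hcard⟩
end
end

section
/- Covertness implies near-independence of the message (secrecy step of the converse). Let M be uniformly distributed on a finite set ℳ and let Y be a finitely-valued random variable on a finite set 𝒴 with |𝒴| ≥ 2. Suppose there is a pmf Q on 𝒴 and σ ∈ [0, 1/4] such that for every m ∈ ℳ the conditional pmf of Y given M = m satisfies V(P_{Y|M=m}, Q) ≤ σ. Then I(M ; Y) ≤ 2σ log₂ |𝒴| + h₂(2σ). In particular, if σ = σ_n → 0 and Y = (X^n, S^n) with |𝒴| growing at most exponentially in n, then I(M ; Y) = o(n). -/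
open Finset Filter Real

noncomputable section

open scoped Classical

/-!
Write two pmfs as `P = c + q` and `R = c + r` with `c = min P R`, so that `q` and `r` have mass
`t = TV P R`. Entropy is subadditive, and the entropy of a normalised measure times its mass is
monotone in the measure; comparing both sides with `c` gives
`H(R) - H(P) ≤ φ(t) := t log₂ |𝒴| + h₂(t)`.
Taking for `R` the law of `Y` and averaging over the rows `P` of the channel, concavity of `φ` gives
`I(M; Y) ≤ φ(t)` for the mean distance `t ≤ 2σ` of the rows from `R`. Since also
`I(M; Y) ≤ log₂ |𝒴| = φ(1)`, concavity on `[t, 1]` gives `I(M; Y) ≤ φ(2σ)` as soon as `2σ ≤ 1`.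
-/

section ScaledEntropy

variable {α : Type*} [Fintype α] {v w : α → ℝ}

/-- The total mass of `w` times the Shannon entropy (in bits) of `w` normalised to mass one, for
nonnegative weights `w` of any total mass. This is the homogeneous extension of `ent` from pmfs to
finite measures; terms with `w a = 0` vanish whatever the junk value of the quotient. -/
def scaledEnt (w : α → ℝ) : ℝ := ∑ a, w a * logb 2 ((∑ b, w b) / w a)

lemma ent_eq_scaledEnt_sub (hw : ∀ a, 0 ≤ w a) :
    ent w = scaledEnt w - (∑ a, w a) * logb 2 (∑ a, w a) := by
  rw [ent, scaledEnt, sum_mul, ← sum_sub_distrib, ← sum_neg_distrib]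
  refine sum_congr rfl fun a _ => ?_
  rcases (hw a).eq_or_lt with ha | ha
  · simp [← ha]
  · have hsum : 0 < ∑ b, w b := ha.trans_le (single_le_sum (fun b _ => hw b) (mem_univ a))
    rw [logb_div hsum.ne' ha.ne']
    ring

lemma ent_eq_scaledEnt (hw : w ∈ stdSimplex ℝ α) : ent w = scaledEnt w := by
  simp [ent_eq_scaledEnt_sub hw.1, hw.2]

lemma ent_nonneg (hw : w ∈ stdSimplex ℝ α) : 0 ≤ ent w := by
  rw [ent, ← sum_neg_distrib]
  refine sum_nonneg fun a _ => neg_nonneg.2 (mul_nonpos_of_nonneg_of_nonpos (hw.1 a) ?_)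
  obtain ⟨h0, h1⟩ := mem_Icc_of_mem_stdSimplex hw a
  exact logb_nonpos one_lt_two h0 h1

lemma ent_add_le (hv : ∀ a, 0 ≤ v a) (hw : ∀ a, 0 ≤ w a) : ent (v + w) ≤ ent v + ent w := by
  have mul_logb_le {x y : ℝ} (hx : 0 ≤ x) (hy : 0 ≤ y) : x * logb 2 x ≤ x * logb 2 (x + y) := by
    rcases hx.eq_or_lt with rfl | hx
    · simp
    · gcongr
      · norm_num
      · linarith
  simp only [ent, ← neg_add, ← sum_add_distrib, Pi.add_apply]
  refine neg_le_neg (sum_le_sum fun a _ => ?_)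
  have hleft := mul_logb_le (hv a) (hw a)
  have hright := mul_logb_le (hw a) (hv a)
  rw [add_comm (w a)] at hright
  linarith

lemma scaledEnt_le_sum_mul_logb (hv : ∀ a, 0 ≤ v a) (hw : ∀ a, 0 ≤ w a)
    (hvw : ∀ a, w a = 0 → v a = 0) :
    scaledEnt v ≤ ∑ a, v a * logb 2 ((∑ b, w b) / w a) := by
  set V := ∑ b, v b
  set W := ∑ b, w b
  have hV : 0 ≤ V := sum_nonneg fun b _ => hv b
  have hW : 0 ≤ W := sum_nonneg fun b _ => hw b
  have term_le (a : α) :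
      v a * logb 2 (V / v a) - v a * logb 2 (W / w a) ≤ (V * (w a / W) - v a) / log 2 := by
    rcases (hv a).eq_or_lt with ha | ha
    · have := div_nonneg (hw a) hW
      simp only [← ha, zero_mul, sub_zero]
      positivity
    · have hwa : 0 < w a := (hw a).lt_of_ne' fun h => ha.ne' (hvw a h)
      have hVpos : 0 < V := ha.trans_le (single_le_sum (fun b _ => hv b) (mem_univ a))
      have hWpos : 0 < W := hwa.trans_le (single_le_sum (fun b _ => hw b) (mem_univ a))
      rw [← mul_sub, ← logb_div (by positivity) (by positivity), logb, ← mul_div_assoc]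
      gcongr
      calc v a * log (V / v a / (W / w a))
          ≤ v a * (V / v a / (W / w a) - 1) := by
            gcongr
            exact log_le_sub_one_of_pos (by positivity)
        _ = V * (w a / W) - v a := by field_simp
  have sum_bound : ∑ a, (V * (w a / W) - v a) / log 2 ≤ 0 := by
    rw [← sum_div, sum_sub_distrib, ← mul_sum, ← sum_div]
    refine div_nonpos_of_nonpos_of_nonneg (sub_nonpos.2 ?_) (log_nonneg one_le_two)
    exact mul_le_of_le_one_right hV (div_self_le_one W)
  rw [← sub_nonpos, scaledEnt, ← sum_sub_distrib]
  exact (sum_le_sum fun a _ => term_le a).trans sum_bound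

lemma scaledEnt_le_sum_mul_logb_card (hw : ∀ a, 0 ≤ w a) :
    scaledEnt w ≤ (∑ a, w a) * logb 2 (Fintype.card α) := by
  simpa [sum_mul] using scaledEnt_le_sum_mul_logb (w := fun _ => 1) hw (by simp) (by simp)

lemma scaledEnt_mono (hv : ∀ a, 0 ≤ v a) (hvw : ∀ a, v a ≤ w a) :
    scaledEnt v ≤ scaledEnt w := by
  have hw (a : α) : 0 ≤ w a := (hv a).trans (hvw a)
  calc scaledEnt v
      ≤ ∑ a, v a * logb 2 ((∑ b, w b) / w a) :=
        scaledEnt_le_sum_mul_logb hv hw fun a ha => le_antisymm (ha ▸ hvw a) (hv a)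
    _ ≤ scaledEnt w := sum_le_sum fun a _ => ?_
  rcases (hw a).eq_or_lt with ha | ha
  · simp [← ha]
  · gcongr
    · refine logb_nonneg one_lt_two ((one_le_div ha).2 ?_)
      exact single_le_sum (fun b _ => hw b) (mem_univ a)
    · exact hvw a

lemma ent_le_logb_card_s13 (hw : w ∈ stdSimplex ℝ α) : ent w ≤ logb 2 (Fintype.card α) := by
  simpa [ent_eq_scaledEnt hw, hw.2] using scaledEnt_le_sum_mul_logb_card hw.1

end ScaledEntropy

section TotalVariation

variable {α : Type*} [Fintype α] {p q : α → ℝ}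

lemma TV_triangle (p q r : α → ℝ) : TV p r ≤ TV p q + TV q r := by
  rw [TV, TV, TV, ← add_div, ← sum_add_distrib]
  gcongr
  exact abs_sub_le _ _ _

lemma TV_nonneg (p q : α → ℝ) : 0 ≤ TV p q :=
  div_nonneg (sum_nonneg fun _ _ => abs_nonneg _) zero_le_two

lemma sum_inf_eq_one_sub_TV (hp : ∑ a, p a = 1) (hq : ∑ a, q a = 1) :
    ∑ a, (p ⊓ q) a = 1 - TV p q := by
  have two_inf (a : α) : (p ⊓ q) a = (p a + q a - |p a - q a|) / 2 := by
    rw [Pi.inf_apply, inf_eq_half_smul_add_sub_abs_sub' ℝ, abs_sub_comm, smul_eq_mul]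
    ring
  simp only [two_inf, TV]
  rw [← sum_div, sum_sub_distrib, sum_add_distrib, hp, hq]
  ring

lemma TV_le_one (hp : p ∈ stdSimplex ℝ α) (hq : q ∈ stdSimplex ℝ α) : TV p q ≤ 1 := by
  rw [← sub_nonneg, ← sum_inf_eq_one_sub_TV hp.2 hq.2]
  exact sum_nonneg fun a _ => le_min (hp.1 a) (hq.1 a)

lemma ent_sub_ent_le (hp : p ∈ stdSimplex ℝ α) (hq : q ∈ stdSimplex ℝ α) :
    ent q - ent p ≤ TV p q * logb 2 (Fintype.card α) + h2 (TV p q) := by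
  set c := p ⊓ q
  have hc (a : α) : 0 ≤ c a := le_min (hp.1 a) (hq.1 a)
  have hr (a : α) : 0 ≤ (q - c) a := sub_nonneg.2 (min_le_right _ _)
  have hcsum : ∑ a, c a = 1 - TV p q := sum_inf_eq_one_sub_TV hp.2 hq.2
  have hrsum : ∑ a, (q - c) a = TV p q := by
    simp only [Pi.sub_apply, sum_sub_distrib, hq.2, hcsum, sub_sub_cancel]
  have hcp : scaledEnt c ≤ ent p :=
    ent_eq_scaledEnt hp ▸ scaledEnt_mono hc fun a => min_le_left _ _
  have hrcard : scaledEnt (q - c) ≤ TV p q * logb 2 (Fintype.card α) :=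
    hrsum ▸ scaledEnt_le_sum_mul_logb_card hr
  have hq_le : ent q ≤ scaledEnt c + scaledEnt (q - c) + h2 (TV p q) :=
    calc ent q = ent (c + (q - c)) := by rw [add_sub_cancel]
      _ ≤ ent c + ent (q - c) := ent_add_le hc hr
      _ = scaledEnt c + scaledEnt (q - c) + h2 (TV p q) := by
        rw [ent_eq_scaledEnt_sub hc, ent_eq_scaledEnt_sub hr, hcsum, hrsum, h2]
        ring
  linarith

end TotalVariation

lemma h2_eq_binEntropy_div_log_two (t : ℝ) : h2 t = binEntropy t / log 2 := by
  rw [h2, binEntropy_eq_negMulLog_add_negMulLog_one_sub]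
  simp only [negMulLog, logb]
  ring

lemma concaveOn_mul_add_h2 (L : ℝ) : ConcaveOn ℝ (Set.Icc 0 1) fun t => t * L + h2 t := by
  have h2_concave : ConcaveOn ℝ (Set.Icc 0 1) h2 := by
    refine (strictConcave_binEntropy.concaveOn.smul (inv_nonneg.2 (log_nonneg one_le_two))).congr
      fun t _ => ?_
    simp only [h2_eq_binEntropy_div_log_two, smul_eq_mul, div_eq_inv_mul]
  exact ((LinearMap.mulRight ℝ L).concaveOn (convex_Icc 0 1)).add h2_concave

section Channel

variable {α β : Type*}

/-- The joint mass function of the input and the output of the channel with transition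
probabilities `W a b = P(b | a)`, when the input has law `μ`. -/
def channelJoint (μ : α → ℝ) (W : α → β → ℝ) : α × β → ℝ := fun z => μ z.1 * W z.1 z.2

variable [Fintype α]

/-- The law of the output of the channel `W` when the input has law `μ`: the `μ`-mixture of the
rows of `W`. -/
def channelOutput (μ : α → ℝ) (W : α → β → ℝ) : β → ℝ := fun b => ∑ a, μ a * W a b

variable [Fintype β] {μ : α → ℝ} {W : α → β → ℝ}

lemma channelOutput_mem_stdSimplex (hμ : μ ∈ stdSimplex ℝ α) (hW : ∀ a, W a ∈ stdSimplex ℝ β) :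
    channelOutput μ W ∈ stdSimplex ℝ β := by
  refine ⟨fun b => sum_nonneg fun a _ => mul_nonneg (hμ.1 a) ((hW a).1 b), ?_⟩
  simp only [channelOutput]
  rw [sum_comm]
  simp only [← mul_sum, (hW _).2, mul_one, hμ.2]

lemma TV_channelOutput_le (hμ : μ ∈ stdSimplex ℝ α) (W : α → β → ℝ) (q : β → ℝ) :
    TV q (channelOutput μ W) ≤ ∑ a, μ a * TV (W a) q := by
  have abs_sub_mixture_le (b : β) :
      |q b - channelOutput μ W b| ≤ ∑ a, μ a * |W a b - q b| := by
    calc |q b - channelOutput μ W b| = |∑ a, μ a * (q b - W a b)| := by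
          simp only [channelOutput, mul_sub, sum_sub_distrib, ← sum_mul, hμ.2, one_mul]
      _ ≤ ∑ a, |μ a * (q b - W a b)| := abs_sum_le_sum_abs _ _
      _ = ∑ a, μ a * |W a b - q b| := by
          simp only [abs_mul, abs_of_nonneg (hμ.1 _), abs_sub_comm]
  calc TV q (channelOutput μ W) ≤ (∑ b, ∑ a, μ a * |W a b - q b|) / 2 := by
        rw [TV]
        gcongr
        exact abs_sub_mixture_le _
    _ = ∑ a, μ a * TV (W a) q := by
        rw [sum_comm, sum_div]
        simp only [TV, ← mul_sum, mul_div_assoc]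

lemma sum_mul_TV_channelOutput_le (hμ : μ ∈ stdSimplex ℝ α) (W : α → β → ℝ) (q : β → ℝ) :
    ∑ a, μ a * TV (W a) (channelOutput μ W) ≤ 2 * ∑ a, μ a * TV (W a) q := by
  calc ∑ a, μ a * TV (W a) (channelOutput μ W)
      ≤ ∑ a, μ a * (TV (W a) q + TV q (channelOutput μ W)) := by
        gcongr with a
        · exact hμ.1 a
        · exact TV_triangle _ _ _
    _ = ∑ a, μ a * TV (W a) q + TV q (channelOutput μ W) := by
        simp only [mul_add, sum_add_distrib, ← sum_mul, hμ.2, one_mul]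
    _ ≤ 2 * ∑ a, μ a * TV (W a) q := by
        linarith [TV_channelOutput_le hμ W q]

lemma ent_channelJoint (hW : ∀ a, ∑ b, W a b = 1) :
    ent (channelJoint μ W) = ent μ + ∑ a, μ a * ent (W a) := by
  have mul_logb_mul (x y : ℝ) :
      x * y * logb 2 (x * y) = x * logb 2 x * y + x * (y * logb 2 y) := by
    rcases eq_or_ne x 0 with rfl | hx
    · simp
    rcases eq_or_ne y 0 with rfl | hy
    · simp
    rw [logb_mul hx hy]
    ring
  simp only [ent, channelJoint, Fintype.sum_prod_type, mul_logb_mul, sum_add_distrib, ← mul_sum,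
    hW, mul_one, mul_neg, sum_neg_distrib]
  ring

lemma mi_channelJoint (hW : ∀ a, ∑ b, W a b = 1) :
    mi (channelJoint μ W) Prod.fst Prod.snd =
      ent (channelOutput μ W) - ∑ a, μ a * ent (W a) := by
  have marginal_fst : pushf (channelJoint μ W) Prod.fst = μ := by
    funext a
    simp [pushf, channelJoint, Fintype.sum_prod_type_right, ← mul_sum, hW]
  have marginal_snd : pushf (channelJoint μ W) Prod.snd = channelOutput μ W := by
    funext b
    simp [pushf, channelJoint, channelOutput, Fintype.sum_prod_type]
  have pushf_pair : pushf (channelJoint μ W) (fun z => (z.1, z.2)) = channelJoint μ W := by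
    funext z
    simp [pushf]
  rw [mi, entRV, entRV, entRV, marginal_fst, marginal_snd, pushf_pair, ent_channelJoint hW]
  ring

lemma mi_channelJoint_le_logb_card (hμ : μ ∈ stdSimplex ℝ α) (hW : ∀ a, W a ∈ stdSimplex ℝ β) :
    mi (channelJoint μ W) Prod.fst Prod.snd ≤ logb 2 (Fintype.card β) := by
  rw [mi_channelJoint fun a => (hW a).2]
  exact (sub_le_self _ (sum_nonneg fun a _ => mul_nonneg (hμ.1 a) (ent_nonneg (hW a)))).trans
    (ent_le_logb_card_s13 (channelOutput_mem_stdSimplex hμ hW))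

lemma sum_mul_TV_mem_Icc (hμ : μ ∈ stdSimplex ℝ α) (hW : ∀ a, W a ∈ stdSimplex ℝ β) {q : β → ℝ}
    (hq : q ∈ stdSimplex ℝ β) : ∑ a, μ a * TV (W a) q ∈ Set.Icc (0 : ℝ) 1 :=
  (convex_Icc 0 1).sum_mem (fun a _ => hμ.1 a) hμ.2
    fun a _ => ⟨TV_nonneg _ _, TV_le_one (hW a) hq⟩

lemma mi_channelJoint_le_sum_mul_TV (hμ : μ ∈ stdSimplex ℝ α)
    (hW : ∀ a, W a ∈ stdSimplex ℝ β) :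
    mi (channelJoint μ W) Prod.fst Prod.snd ≤
      (∑ a, μ a * TV (W a) (channelOutput μ W)) * logb 2 (Fintype.card β) +
        h2 (∑ a, μ a * TV (W a) (channelOutput μ W)) := by
  set R := channelOutput μ W
  set L := logb 2 (Fintype.card β : ℝ)
  have hR : R ∈ stdSimplex ℝ β := channelOutput_mem_stdSimplex hμ hW
  calc mi (channelJoint μ W) Prod.fst Prod.snd
      = ∑ a, μ a * (ent R - ent (W a)) := by
        rw [mi_channelJoint fun a => (hW a).2]
        simp only [mul_sub, sum_sub_distrib, ← sum_mul, hμ.2, one_mul, R]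
    _ ≤ ∑ a, μ a * (TV (W a) R * L + h2 (TV (W a) R)) := by
        gcongr with a
        · exact hμ.1 a
        · exact ent_sub_ent_le (hW a) hR
    _ ≤ (∑ a, μ a * TV (W a) R) * L + h2 (∑ a, μ a * TV (W a) R) :=
        (concaveOn_mul_add_h2 L).le_map_sum (fun a _ => hμ.1 a) hμ.2
          fun a _ => ⟨TV_nonneg _ _, TV_le_one (hW a) hR⟩

theorem covertness_near_independence_general (hμ : μ ∈ stdSimplex ℝ α)
    (hW : ∀ a, W a ∈ stdSimplex ℝ β) {q : β → ℝ} {σ : ℝ} (hσ : σ ≤ 1 / 2)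
    (hTV : ∑ a, μ a * TV (W a) q ≤ σ) :
    mi (channelJoint μ W) Prod.fst Prod.snd ≤
      2 * σ * logb 2 (Fintype.card β) + h2 (2 * σ) := by
  set L := logb 2 (Fintype.card β : ℝ)
  set t := ∑ a, μ a * TV (W a) (channelOutput μ W)
  have ht : t ∈ Set.Icc (0 : ℝ) 1 :=
    sum_mul_TV_mem_Icc hμ hW (channelOutput_mem_stdSimplex hμ hW)
  have ht_le : t ≤ 2 * σ := (sum_mul_TV_channelOutput_le hμ W q).trans (by linarith)
  have le_at_one : mi (channelJoint μ W) Prod.fst Prod.snd ≤ 1 * L + h2 1 := by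
    simpa [h2] using mi_channelJoint_le_logb_card hμ hW
  exact (le_min (mi_channelJoint_le_sum_mul_TV hμ hW) le_at_one).trans <|
    (concaveOn_mul_add_h2 L).min_le_of_mem_Icc ht ⟨zero_le_one, le_rfl⟩ ⟨ht_le, by linarith⟩

end Channel

section UniformInput

variable {α β : Type*} [Fintype α] [Nonempty α]

lemma uniform_mem_stdSimplex : (fun _ => 1 / (Fintype.card α : ℝ)) ∈ stdSimplex ℝ α :=
  ⟨fun _ => by positivity, by simp⟩

lemma channelJoint_uniform (p : α × β → ℝ) :
    channelJoint (fun _ => 1 / (Fintype.card α : ℝ)) (fun a b => Fintype.card α * p (a, b)) =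
      p := by
  funext z
  simp [channelJoint]

lemma conditional_mem_stdSimplex_of_uniform [Fintype β] {p : α × β → ℝ} (hp : ∀ z, 0 ≤ p z)
    (hunif : ∀ a, ∑ b, p (a, b) = 1 / (Fintype.card α : ℝ)) (a : α) :
    (fun b => Fintype.card α * p (a, b)) ∈ stdSimplex ℝ β :=
  ⟨fun _ => mul_nonneg (Nat.cast_nonneg _) (hp _), by simp [← mul_sum, hunif]⟩

lemma uniform_mean_le {f : α → ℝ} {c : ℝ} (hf : ∀ a, f a ≤ c) :
    ∑ a, 1 / (Fintype.card α : ℝ) * f a ≤ c :=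
  (convex_Iic c).sum_mem (fun a _ => uniform_mem_stdSimplex.1 a) uniform_mem_stdSimplex.2
    fun a _ => hf a

end UniformInput

/-- **Covertness implies near-independence of the message** (secrecy step of the
converse).  Let `M` be uniform on a finite set `ℳ` and `Y` a finitely-valued random
variable on a finite set `𝒴` with `|𝒴| ≥ 2`, with joint pmf `p` on `ℳ × 𝒴`.  If there
are a pmf `Q` on `𝒴` and `σ ∈ [0, 1/4]` such that `V(P_{Y|M=m}, Q) ≤ σ` for every `m`,
then `I(M;Y) ≤ 2σ log₂ |𝒴| + h₂(2σ)`. -/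
theorem covertness_near_independence
    {MT YT : Type*} [Fintype MT] [Fintype YT] [Nonempty MT]
    (hY : 2 ≤ Fintype.card YT)
    (p : MT × YT → ℝ) (hp0 : ∀ z, 0 ≤ p z) (hp1 : ∑ z, p z = 1)
    -- M is uniform on MT
    (hunif : ∀ m : MT, ∑ y : YT, p (m, y) = 1 / (Fintype.card MT : ℝ))
    (Q : YT → ℝ) (hQ0 : ∀ y, 0 ≤ Q y) (hQ1 : ∑ y, Q y = 1)
    (σ : ℝ) (hσ0 : 0 ≤ σ) (hσ1 : σ ≤ 1 / 4)
    -- the conditional pmf of Y given M = m is σ-close to Q in total variation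
    (hTV : ∀ m : MT,
      TV (fun y => (Fintype.card MT : ℝ) * p (m, y)) Q ≤ σ) :
    mi p Prod.fst Prod.snd ≤
      2 * σ * Real.logb 2 (Fintype.card YT : ℝ) + h2 (2 * σ) := by
  rw [← channelJoint_uniform p]
  exact covertness_near_independence_general uniform_mem_stdSimplex
    (conditional_mem_stdSimplex_of_uniform hp0 hunif) (by linarith) (uniform_mean_le hTV)
end
end
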